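/- arXiv:1909.09832 — 2 statements merged into one kernel-verified Lean document; each statement's English description precedes it below -/
import Mathlib

section
/- Let L be a finite Galois extension of K and let B be the integral closure of A in L. Then for any finite subset S of B there is an A-subalgebra B' of B with S ⊆ B' such that B' is free of finite rank as an A-module and B' is of complete intersection over A, i.e., for some n ≥ 0 there exists a surjective A-algebra homomorphism from the polynomial ring A[X₁, …, Xₙ] onto B' whose kernel is generated by n elements. -/
/-!
The integral closure of `A` in an algebraic closure of `L` is a local ring, by Hensel's lemma, and
then a valuation ring; its valuation `v` is Galois-invariant and Henselian on every intermediate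
field. It suffices to climb from `K` to `L` by steps `F / E` in which the valuation ring of `F` is
the directed union of the rings `𝒪_E[α]`: then every finite set of integral elements lies in an
iterated adjunction of roots of monic polynomials, which is free, and of complete intersection
because each adjunction adds one variable and one relation.

If some Galois automorphism acts nontrivially on the residue field, a simple root of a residual
polynomial generates an unramified step. Otherwise the Galois group is solvable, since the kernel of
its tame character `σ ↦ (x ↦ σ x / x mod 𝔪)` is trivial or a `p`-group, so there is a Galois step of
prime degree `l`. Such a step is ramified, or has an inseparable residue extension, or is immediate.
In the immediate case elements of `F` are polynomials of degree less than `l` in some `x`, and by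
induction on the degree the constant term dominates their Taylor expansions at good enough
approximations of `x`: otherwise Newton's method would give a root in `E`, which splits off.
-/

set_option synthInstance.maxHeartbeats 400000

/-- An `A`-algebra `C` is of *complete intersection* over `A` if for some `n ≥ 0` there is a
surjective `A`-algebra homomorphism `A[X₁, …, Xₙ] → C` whose kernel is generated by `n`
elements. -/
def IsCompleteIntersectionOver (A C : Type*) [CommRing A] [CommRing C] [Algebra A C] : Prop :=
  ∃ (n : ℕ) (φ : MvPolynomial (Fin n) A →ₐ[A] C),
    Function.Surjective φ ∧
      ∃ g : Fin n → MvPolynomial (Fin n) A, RingHom.ker φ = Ideal.span (Set.range g)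

open Polynomial IsLocalRing

section CompleteIntersection

namespace IsCompleteIntersectionOver

variable {A C D P : Type*} [CommRing A] [CommRing C] [CommRing D] [CommRing P]
  [Algebra A C] [Algebra A D] [Algebra A P]

theorem of_ker_eq_span {n : ℕ} (e : MvPolynomial (Fin n) A ≃ₐ[A] P) {φ : P →ₐ[A] C}
    (hφ : Function.Surjective φ) {g : Fin n → P} (hg : RingHom.ker φ = Ideal.span (Set.range g)) :
    IsCompleteIntersectionOver A C := by
  refine ⟨n, φ.comp e, hφ.comp e.surjective, e.symm ∘ g, ?_⟩
  calc RingHom.ker (φ.comp (e : MvPolynomial (Fin n) A →ₐ[A] P))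
      = (RingHom.ker φ).comap (e : MvPolynomial (Fin n) A ≃+* P) := rfl
    _ = (RingHom.ker φ).map ((e : MvPolynomial (Fin n) A ≃+* P).symm :
          P →+* MvPolynomial (Fin n) A) := (Ideal.map_symm _).symm
    _ = Ideal.span (Set.range (e.symm ∘ g)) := by
      rw [hg, Ideal.map_span, ← Set.range_comp]
      rfl

variable (A) in
theorem self : IsCompleteIntersectionOver A A :=
  of_ker_eq_span (MvPolynomial.isEmptyAlgEquiv A (Fin 0)) (φ := AlgHom.id A A)
    (g := Fin.elim0) Function.surjective_id <| by
      rw [Set.range_eq_empty, Ideal.span_empty]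
      exact (RingHom.injective_iff_ker_eq_bot _).mp Function.injective_id

theorem of_algEquiv (h : IsCompleteIntersectionOver A C) (e : C ≃ₐ[A] D) :
    IsCompleteIntersectionOver A D := by
  obtain ⟨n, φ, hφ, g, hg⟩ := h
  refine ⟨n, (e : C →ₐ[A] D).comp φ, e.surjective.comp hφ, g, hg ▸ ?_⟩
  exact RingHom.ker_comp_of_injective (φ : MvPolynomial (Fin n) A →+* C)
    (f := (e : C →+* D)) e.injective

-- Lift a presentation of `C` to `C[X]` with the same relations and add a lift of `f` to them.
theorem adjoinRoot (h : IsCompleteIntersectionOver A C) (f : C[X]) :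
    IsCompleteIntersectionOver A (AdjoinRoot f) := by
  obtain ⟨n, φ, hφ, g, hg⟩ := h
  have hμ : Function.Surjective (mapAlgHom φ) := Polynomial.map_surjective φ.toRingHom hφ
  obtain ⟨F, rfl⟩ := hμ f
  refine of_ker_eq_span (MvPolynomial.finSuccEquiv A n)
    (φ := (AdjoinRoot.mkₐ (mapAlgHom φ F)).restrictScalars A |>.comp (mapAlgHom φ))
    (AdjoinRoot.mk_surjective.comp hμ) (g := Fin.cons F (Polynomial.C ∘ g)) ?_
  calc RingHom.ker ((AdjoinRoot.mk (mapAlgHom φ F)).comp (mapAlgHom φ).toRingHom)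
      = ((Ideal.span {F}).map (mapAlgHom φ)).comap (mapAlgHom φ) := by
        ext p
        rw [RingHom.mem_ker, Ideal.mem_comap, Ideal.map_span, Set.image_singleton,
          Ideal.mem_span_singleton, ← AdjoinRoot.mk_eq_zero]
        rfl
    _ = Ideal.span {F} ⊔ RingHom.ker (mapRingHom (φ : MvPolynomial (Fin n) A →+* C)) :=
        Ideal.comap_map_of_surjective _ hμ _
    _ = Ideal.span (Set.range (Fin.cons F (Polynomial.C ∘ g) : Fin (n + 1) → _)) := by
        have hg' : RingHom.ker (φ : MvPolynomial (Fin n) A →+* C) = Ideal.span (Set.range g) := hg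
        rw [ker_mapRingHom, hg', Fin.range_cons, Ideal.span_insert, Ideal.map_span, Set.range_comp]

end IsCompleteIntersectionOver

/-- The `A`-algebras allowed as `B'` in the theorem: free of finite rank and of complete
intersection over `A`. -/
structure IsFreeCompleteIntersection (A C : Type*) [CommRing A] [CommRing C] [Algebra A C] :
    Prop where
  free : Module.Free A C
  finite : Module.Finite A C
  isCompleteIntersectionOver : IsCompleteIntersectionOver A C

namespace IsFreeCompleteIntersection

variable {A C D : Type*} [CommRing A] [CommRing C] [CommRing D] [Algebra A C] [Algebra A D]

variable (A) in
theorem self : IsFreeCompleteIntersection A A :=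
  ⟨inferInstance, inferInstance, .self A⟩

theorem of_algEquiv (h : IsFreeCompleteIntersection A C) (e : C ≃ₐ[A] D) :
    IsFreeCompleteIntersection A D :=
  have := h.free
  have := h.finite
  ⟨.of_equiv e.toLinearEquiv, .equiv e.toLinearEquiv, h.isCompleteIntersectionOver.of_algEquiv e⟩

theorem range (h : IsFreeCompleteIntersection A C) {φ : C →ₐ[A] D} (hφ : Function.Injective φ) :
    IsFreeCompleteIntersection A φ.range :=
  h.of_algEquiv (AlgEquiv.ofInjective φ hφ)

theorem adjoinRoot (h : IsFreeCompleteIntersection A C) {f : C[X]} (hf : f.Monic) :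
    IsFreeCompleteIntersection A (AdjoinRoot f) :=
  have := h.free
  have := h.finite
  have := hf.free_adjoinRoot
  have := hf.finite_adjoinRoot
  ⟨.trans (S := C), .trans C _, h.isCompleteIntersectionOver.adjoinRoot f⟩

end IsFreeCompleteIntersection

end CompleteIntersection

section MonogenicExhaustion

/-- The conclusion of the theorem for an arbitrary `A`-algebra `R` in place of `L`: every finite set
of elements integral over `A` lies in a subalgebra that is free of finite rank and of complete
intersection over `A`. -/
def IsExhaustedByFreeCI (A R : Type*) [CommRing A] [CommRing R] [Algebra A R] : Prop :=
  ∀ S : Finset R, (∀ s ∈ S, IsIntegral A s) →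
    ∃ B : Subalgebra A R, (∀ s ∈ S, s ∈ B) ∧ IsFreeCompleteIntersection A B

variable {A E F Γ : Type*} [CommRing A] [Field E] [Field F] [Algebra A E] [Algebra A F]
  [Algebra E F] [LinearOrderedCommGroupWithZero Γ]

/-- `s ∈ 𝒪_E[α]`, where `𝒪_E` is the valuation ring of the restriction of `v` to `E`. -/
def MemIntegralAdjoin (E : Type*) {F Γ : Type*} [Field E] [Field F] [Algebra E F]
    [LinearOrderedCommGroupWithZero Γ] (v : Valuation F Γ) (α s : F) : Prop :=
  ∃ g : E[X], (∀ i, v (algebraMap E F (g.coeff i)) ≤ 1) ∧ aeval α g = s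

/-- The valuation ring of `v` is the directed union of the rings `𝒪_E[α]`: every finite set of
integral elements lies in a single one of them. -/
def IsMonogenicallyExhausted (E : Type*) {F Γ : Type*} [Field E] [Field F] [Algebra E F]
    [LinearOrderedCommGroupWithZero Γ] (v : Valuation F Γ) : Prop :=
  ∀ S : Finset F, (∀ s ∈ S, v s ≤ 1) → ∃ α, v α ≤ 1 ∧ ∀ s ∈ S, MemIntegralAdjoin E v α s

theorem IsExhaustedByFreeCI.of_isFractionRing (A K : Type*) [CommRing A]
    [IsIntegrallyClosed A] [Field K] [Algebra A K] [IsFractionRing A K] :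
    IsExhaustedByFreeCI A K := fun _ hS =>
  ⟨(Algebra.ofId A K).range, fun s hs => IsIntegrallyClosed.isIntegral_iff.mp (hS s hs),
    (IsFreeCompleteIntersection.self A).range (IsFractionRing.injective A K)⟩

theorem IsExhaustedByFreeCI.of_algEquiv {R R' : Type*} [CommRing R] [CommRing R'] [Algebra A R]
    [Algebra A R'] (h : IsExhaustedByFreeCI A R) (e : R ≃ₐ[A] R') : IsExhaustedByFreeCI A R' := by
  classical
  intro S hS
  obtain ⟨B, hSB, hB⟩ := h (S.image e.symm) fun r hr => by
    obtain ⟨s, hs, rfl⟩ := Finset.mem_image.mp hr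
    exact (hS s hs).map e.symm
  refine ⟨B.map (e : R →ₐ[A] R'), fun s hs => ?_,
    hB.of_algEquiv (B.equivMapOfInjective (e : R →ₐ[A] R') e.injective)⟩
  exact ⟨_, hSB _ (Finset.mem_image_of_mem _ hs), e.apply_symm_apply s⟩

theorem injective_lift_of_map_eq_minpoly {C : Type*} [CommRing C] [Algebra C E] [Algebra C F]
    [IsScalarTower C E F] (hinj : Function.Injective (algebraMap C E)) {α : F}
    (hα : IsIntegral E α) {f : C[X]} (hf : f.map (algebraMap C E) = minpoly E α)
    (h0 : aeval α f = 0) :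
    Function.Injective (AdjoinRoot.liftAlgHom f (Algebra.ofId C F) α h0) := by
  rw [injective_iff_map_eq_zero]
  intro x hx
  obtain ⟨p, rfl⟩ := AdjoinRoot.mk_surjective x
  have hfm : f.Monic := hinj.monic_map_iff.mpr (hf ▸ minpoly.monic hα)
  have hp : aeval α (p.map (algebraMap C E)) = 0 := by
    rw [aeval_map_algebraMap]
    exact hx
  rw [AdjoinRoot.mk_eq_zero, ← map_dvd_map _ hinj hfm, hf]
  exact minpoly.dvd E α hp

variable [IsScalarTower A E F]

theorem isIntegral_coeff_minpoly {α : F} (hα : IsIntegral A α) (i : ℕ) :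
    IsIntegral A ((minpoly E α).coeff i) := by
  obtain ⟨p, hp, h0⟩ := hα
  refine isIntegral_coeff_of_dvd p _ hp (minpoly.monic (IsIntegral.tower_top ⟨p, hp, h0⟩))
    (minpoly.dvd E α ?_) i
  rw [aeval_map_algebraMap]
  exact h0

theorem exists_isFreeCompleteIntersection_adjoin {B : Subalgebra A E}
    (hB : IsFreeCompleteIntersection A B) {α : F} (hα : IsIntegral E α)
    (hαB : ∀ i, (minpoly E α).coeff i ∈ B) :
    ∃ D : Subalgebra A F, IsFreeCompleteIntersection A D ∧
      ∀ g : E[X], (∀ i, g.coeff i ∈ B) → aeval α g ∈ D := by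
  have hlift : ∀ g : E[X], (∀ i, g.coeff i ∈ B) → ∃ q : B[X], q.map (algebraMap B E) = g :=
    fun g hg => (lifts_iff_coeff_lifts g).mpr fun i => ⟨⟨_, hg i⟩, rfl⟩
  have hinj : Function.Injective (algebraMap B E) := Subtype.val_injective
  obtain ⟨f, hf⟩ := hlift _ hαB
  have h0 : aeval α f = 0 := by rw [← aeval_map_algebraMap E, hf, minpoly.aeval]
  let ψ : AdjoinRoot f →ₐ[B] F := AdjoinRoot.liftAlgHom f (Algebra.ofId B F) α h0
  have hψ : Function.Injective (ψ.restrictScalars A) :=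
    injective_lift_of_map_eq_minpoly hinj hα hf h0
  refine ⟨_, (hB.adjoinRoot (hinj.monic_map_iff.mpr (hf ▸ minpoly.monic hα))).range hψ, ?_⟩
  intro g hg
  obtain ⟨q, rfl⟩ := hlift g hg
  exact ⟨AdjoinRoot.mk f q, (aeval_map_algebraMap E α q).symm⟩

theorem IsMonogenicallyExhausted.isExhaustedByFreeCI {v : Valuation F Γ}
    (hF : IsMonogenicallyExhausted E v) (hv : ∀ x, v x ≤ 1 ↔ IsIntegral A x)
    (hE : IsExhaustedByFreeCI A E) : IsExhaustedByFreeCI A F := by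
  classical
  intro S hS
  obtain ⟨α, hα1, hα⟩ := hF S fun s hs => (hv s).mpr (hS s hs)
  choose! g hg hgs using hα
  have hαA : IsIntegral A α := (hv α).mp hα1
  let T : Finset E := (minpoly E α).coeffs ∪ S.biUnion fun s => (g s).coeffs
  have hT : ∀ e ∈ T, IsIntegral A e := fun e he => by
    rcases Finset.mem_union.mp he with he | he
    · obtain ⟨i, -, rfl⟩ := mem_coeffs_iff.mp he
      exact isIntegral_coeff_minpoly hαA i
    · obtain ⟨s, hs, he⟩ := Finset.mem_biUnion.mp he
      obtain ⟨i, -, rfl⟩ := mem_coeffs_iff.mp he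
      exact (isIntegral_algebraMap_iff (algebraMap E F).injective).mp ((hv _).mp (hg s hs i))
  obtain ⟨B, hTB, hB⟩ := hE T hT
  have hcoeff : ∀ p : E[X], p.coeffs ⊆ T → ∀ i, p.coeff i ∈ B := fun p hp i => by
    by_cases hi : p.coeff i = 0
    · exact hi ▸ B.zero_mem
    · exact hTB _ (hp (coeff_mem_coeffs hi))
  obtain ⟨D, hD, hmem⟩ := exists_isFreeCompleteIntersection_adjoin hB hαA.tower_top
    (hcoeff _ Finset.subset_union_left)
  refine ⟨D, fun s hs => hgs s hs ▸ hmem _ (hcoeff _ ?_), hD⟩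
  exact (Finset.subset_biUnion_of_mem (fun s => (g s).coeffs) hs).trans Finset.subset_union_right

end MonogenicExhaustion

section Primitive

theorem exists_eq_C_mul_map_residue_ne_zero (R : Type*) {K : Type*} [CommRing R] [IsDomain R]
    [ValuationRing R] [Field K] [Algebra R K] [IsFractionRing R K] {p : K[X]} (hp : p ≠ 0) :
    ∃ c : K, c ≠ 0 ∧ ∃ q : R[X], p = C c * q.map (algebraMap R K) ∧ q.map (residue R) ≠ 0 := by
  obtain ⟨i, hi, hmax⟩ := p.support.exists_max_image
    (fun i => ValuationRing.valuation R K (p.coeff i)) (support_nonempty.mpr hp)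
  set c := p.coeff i
  have hc : c ≠ 0 := mem_support_iff.mp hi
  have hlift : C c⁻¹ * p ∈ lifts (algebraMap R K) := (lifts_iff_coeff_lifts _).mpr fun j => by
    by_cases hj : p.coeff j = 0
    · exact ⟨0, by simp [hj]⟩
    · rw [coeff_C_mul, Set.mem_range, ← ValuationRing.mem_integer_iff, Valuation.mem_integer_iff,
        map_mul, map_inv₀, inv_mul_le_iff₀ (by simpa [zero_lt_iff] using hc), mul_one]
      exact hmax j (mem_support_iff.mpr hj)
  obtain ⟨q, hq⟩ := (mem_lifts _).mp hlift
  refine ⟨c, hc, q, ?_, fun h0 => ?_⟩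
  · rw [hq, ← mul_assoc, ← C_mul, mul_inv_cancel₀ hc, C_1, one_mul]
  have hqi : q.coeff i = 1 := IsFractionRing.injective R K <| by
    rw [← coeff_map, hq, coeff_C_mul, inv_mul_cancel₀ hc, map_one]
  simpa [hqi] using congrArg (fun r => r.coeff i) h0

end Primitive

section ValuedExtension

variable {E F Γ : Type*} [Field E] [Field F] [Algebra E F] [LinearOrderedCommGroupWithZero Γ]
  (v : Valuation F Γ)

/-- The valuation ring `𝒪_E` of the restriction of `v` to `E`. -/
abbrev baseValuationSubring (E : Type*) {F Γ : Type*} [Field E] [Field F] [Algebra E F]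
    [LinearOrderedCommGroupWithZero Γ] (v : Valuation F Γ) : ValuationSubring E :=
  (v.comap (algebraMap E F)).valuationSubring

instance : (v.comap (algebraMap E F)).HasExtension v := ⟨Valuation.IsEquiv.refl⟩

theorem residue_eq_zero_iff_lt_one (x : v.valuationSubring) : residue _ x = 0 ↔ v (x : F) < 1 := by
  rw [residue_eq_zero_iff]
  exact Valuation.mem_maximalIdeal_iff ..

theorem aeval_residue (q : (baseValuationSubring E v)[X]) (x : v.valuationSubring) :
    aeval (residue _ x) (q.map (residue (baseValuationSubring E v))) = residue _ (aeval x q) :=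
  (aeval_map_algebraMap _ _ _).trans (aeval_algebraMap_apply _ _ _)

variable {v} in
theorem IsMonogenicallyExhausted.of_coeff_le (pb : PowerBasis E F) (h1 : v pb.gen ≤ 1)
    (h : ∀ g : E[X], g.natDegree < pb.dim →
      ∀ i, v (algebraMap E F (g.coeff i)) ≤ v (aeval pb.gen g)) :
    IsMonogenicallyExhausted E v := fun S hS => ⟨pb.gen, h1, fun s hs => by
  obtain ⟨g, hg, rfl⟩ := pb.exists_eq_aeval s
  exact ⟨g, fun i => (h g hg i).trans (hS _ hs), rfl⟩⟩

theorem valuation_coeff_le_of_natDegree_lt (x : v.valuationSubring) {g : E[X]}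
    (hg : g.natDegree <
      (minpoly (ResidueField (baseValuationSubring E v)) (residue v.valuationSubring x)).natDegree)
    (i : ℕ) : v (algebraMap E F (g.coeff i)) ≤ v (aeval (x : F) g) := by
  rcases eq_or_ne g 0 with rfl | hg0
  · simp
  obtain ⟨c, hc, q, rfl, hq⟩ :=
    exists_eq_C_mul_map_residue_ne_zero (baseValuationSubring E v) hg0
  have hunit : v ((aeval x q : v.valuationSubring) : F) = 1 := by
    refine le_antisymm (aeval x q).2 (not_lt.mp fun hlt => ?_)
    rw [← residue_eq_zero_iff_lt_one, ← aeval_residue] at hlt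
    refine hg.not_ge ((natDegree_le_natDegree (minpoly.degree_le_of_ne_zero _ _ hq hlt)).trans ?_)
    rw [natDegree_C_mul hc]
    exact natDegree_map_le.trans (natDegree_map_eq_of_injective Subtype.val_injective q).ge
  have heval : aeval (x : F) (q.map (algebraMap (baseValuationSubring E v) E)) =
      ((aeval x q : v.valuationSubring) : F) :=
    (aeval_map_algebraMap _ _ _).trans (aeval_algebraMap_apply F x q)
  rw [coeff_C_mul, coeff_map, map_mul, map_mul, map_mul, aeval_C, heval, map_mul, hunit, mul_one]
  exact mul_le_of_le_one_right' (q.coeff i).2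

end ValuedExtension

section Unramified

variable {E F Γ : Type*} [Field E] [Field F] [Algebra E F] [LinearOrderedCommGroupWithZero Γ]
  {v : Valuation F Γ}

/-- Hensel's lemma holds for `v`: a simple root of the reduction of an integral polynomial lifts to
a root. The polynomial need not be monic, unlike in Mathlib's `HenselianLocalRing`. -/
def IsHenselianValuation {F Γ : Type*} [Field F] [LinearOrderedCommGroupWithZero Γ]
    (v : Valuation F Γ) : Prop :=
  ∀ g : F[X], (∀ i, v (g.coeff i) ≤ 1) → ∀ b : F, v b ≤ 1 → v (g.eval b) < 1 →
    v (g.derivative.eval b) = 1 → ∃ c : F, g.eval c = 0 ∧ v (c - b) < 1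

instance [Algebra.IsAlgebraic E F] : Algebra.IsAlgebraic
    (ResidueField (baseValuationSubring E v)) (ResidueField v.valuationSubring) where
  isAlgebraic y := by
    obtain ⟨x, rfl⟩ := residue_surjective y
    obtain ⟨p, hp, h0⟩ := Algebra.IsAlgebraic.isAlgebraic (R := E) (x : F)
    obtain ⟨c, hc, q, rfl, hq⟩ :=
      exists_eq_C_mul_map_residue_ne_zero (baseValuationSubring E v) hp
    have hx : aeval (x : F) q = 0 := by simpa [hc] using h0
    refine ⟨_, hq, ?_⟩
    rw [aeval_residue, show aeval x q = 0 from Subtype.ext <|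
      (aeval_algebraMap_apply F x q).symm.trans hx, map_zero]

theorem map_sub_lt_one_of_isPurelyInseparable
    [IsPurelyInseparable (ResidueField (baseValuationSubring E v))
      (ResidueField v.valuationSubring)]
    {σ : F →ₐ[E] F} (hσ : ∀ x, v (σ x) = v x) {b : F} (hb : v b ≤ 1) : v (σ b - b) < 1 := by
  let τ : v.valuationSubring →ₐ[baseValuationSubring E v] v.valuationSubring :=
    { σ.toRingHom.restrict v.valuationSubring v.valuationSubring fun x hx => (hσ x).trans_le hx with
      commutes' := fun x => Subtype.ext (σ.commutes x) }
  have : IsLocalHom τ := ⟨fun x hx => by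
    rw [← residue_ne_zero_iff_isUnit, Ne, residue_eq_zero_iff_lt_one] at hx ⊢
    exact fun h => hx ((hσ x).trans_lt h)⟩
  have hτ : ResidueField.mapAlgHom' τ = AlgHom.id _ _ := AlgHom.coe_ringHom_injective <|
    IsPurelyInseparable.injective_comp_algebraMap (ResidueField (baseValuationSubring E v)) _ _
      (by simp only [AlgHom.comp_algebraMap])
  have h := DFunLike.congr_fun hτ (residue _ ⟨b, hb⟩)
  rw [ResidueField.mapAlgHom'_residue, AlgHom.id_apply, ← sub_eq_zero, ← map_sub,
    residue_eq_zero_iff_lt_one] at h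
  exact h

theorem exists_isSeparable_residue_notMem_range [Algebra.IsAlgebraic E F] {σ : F →ₐ[E] F}
    (hσ : ∀ x, v (σ x) = v x) {b : F} (hb : v b ≤ 1) (hσb : ¬ v (σ b - b) < 1) :
    ∃ x : v.valuationSubring,
      IsSeparable (ResidueField (baseValuationSubring E v)) (residue v.valuationSubring x) ∧
      residue _ x ∉ (algebraMap (ResidueField (baseValuationSubring E v)) _).range := by
  contrapose! hσb
  have : IsPurelyInseparable (ResidueField (baseValuationSubring E v))
      (ResidueField v.valuationSubring) := isPurelyInseparable_iff.mpr fun y =>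
    ⟨Algebra.IsIntegral.isIntegral y, by
      obtain ⟨x, rfl⟩ := residue_surjective y
      exact hσb x⟩
  exact map_sub_lt_one_of_isPurelyInseparable hσ hb

theorem IsHenselianValuation.exists_root_residue_eq (hv : IsHenselianValuation v)
    {p : (baseValuationSubring E v)[X]} {x : v.valuationSubring}
    (h0 : aeval (residue _ x) (p.map (residue _)) = 0)
    (h1 : aeval (residue _ x) (derivative (p.map (residue _))) ≠ 0) :
    ∃ y : v.valuationSubring, aeval y p = 0 ∧ residue _ y = residue _ x := by
  have heval (r : (baseValuationSubring E v)[X]) (y : F) :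
      (r.map (algebraMap _ F)).eval y = aeval y r := eval_map_algebraMap r y
  have hcoe (r : (baseValuationSubring E v)[X]) (y : v.valuationSubring) :
      aeval (y : F) r = (aeval y r : v.valuationSubring) := aeval_algebraMap_apply F y r
  obtain ⟨y, hy, hyx⟩ := hv (p.map (algebraMap _ F))
    (fun i => by rw [coeff_map]; exact (p.coeff i).2) x x.2
    (by rwa [heval, hcoe, ← residue_eq_zero_iff_lt_one, ← aeval_residue])
    (le_antisymm (by rw [derivative_map, heval, hcoe]; exact (aeval x (derivative p)).2) <| by
      rwa [← not_lt, derivative_map, heval, hcoe, ← residue_eq_zero_iff_lt_one, ← aeval_residue,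
        ← derivative_map])
  have hy1 : v y ≤ 1 := by simpa using v.map_add_le hyx.le x.2
  refine ⟨(⟨y, hy1⟩ : v.valuationSubring), Subtype.ext ?_, ?_⟩
  · rwa [heval, hcoe p ⟨y, hy1⟩] at hy
  · rwa [← sub_eq_zero, ← map_sub, residue_eq_zero_iff_lt_one]

theorem IsHenselianValuation.exists_residue_eq_of_isSeparable (hv : IsHenselianValuation v)
    {x : v.valuationSubring}
    (hx : IsSeparable (ResidueField (baseValuationSubring E v)) (residue _ x)) :
    ∃ y : v.valuationSubring, residue _ y = residue _ x ∧ IsIntegral E (y : F) ∧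
      (minpoly E (y : F)).natDegree ≤
        (minpoly (ResidueField (baseValuationSubring E v)) (residue _ x)).natDegree := by
  obtain ⟨p, hpq, hpd, hpm⟩ := lifts_and_natDegree_eq_and_monic
    ((lifts_iff_coeff_lifts _).mpr fun i => residue_surjective _) (minpoly.monic hx.isIntegral)
  obtain ⟨y, hy, hyx⟩ := hv.exists_root_residue_eq (p := p) (x := x)
    (by rw [hpq, minpoly.aeval])
    (by rw [hpq]; exact hx.aeval_derivative_ne_zero (minpoly.aeval _ _))
  have hroot : aeval (y : F) (p.map (algebraMap _ E)) = 0 := by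
    rw [aeval_map_algebraMap]
    exact (aeval_algebraMap_apply F y p).trans (congrArg _ hy)
  refine ⟨y, hyx, ⟨_, hpm.map _, hroot⟩, ?_⟩
  rw [← hpd]
  exact (natDegree_le_of_dvd (minpoly.dvd E _ hroot) (hpm.map _).ne_zero).trans natDegree_map_le

theorem IsHenselianValuation.exists_isMonogenicallyExhausted_of_not_lt [Algebra.IsAlgebraic E F]
    (hv : IsHenselianValuation v) {σ : F →ₐ[E] F} (hσ : ∀ x, v (σ x) = v x) {b : F} (hb : v b ≤ 1)
    (hσb : ¬ v (σ b - b) < 1) :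
    ∃ E' : IntermediateField E F, E' ≠ ⊥ ∧
      IsMonogenicallyExhausted E (v.comap (algebraMap E' F)) := by
  obtain ⟨x, hsep, hx⟩ := exists_isSeparable_residue_notMem_range hσ hb hσb
  obtain ⟨α, hαx, hα, hdeg⟩ := hv.exists_residue_eq_of_isSeparable hsep
  refine ⟨IntermediateField.adjoin E {(α : F)}, fun hbot => ?_,
    .of_coeff_le (IntermediateField.adjoin.powerBasis hα) ?_ ?_⟩
  · obtain ⟨e, he⟩ := IntermediateField.mem_bot.mp
      (IntermediateField.adjoin_simple_eq_bot_iff.mp hbot)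
    have he1 : e ∈ baseValuationSubring E v := (congrArg v he).trans_le α.2
    refine hx ⟨residue _ ⟨e, he1⟩, ?_⟩
    rw [← hαx]
    exact congrArg (residue v.valuationSubring) (Subtype.ext he)
  · exact α.2
  · intro g hg i
    rw [IntermediateField.adjoin.powerBasis_dim] at hg
    have hle := valuation_coeff_le_of_natDegree_lt v α (hαx ▸ hg.trans_le hdeg) i
    rw [Valuation.comap_apply, Valuation.comap_apply, ← aeval_algebraMap_apply]
    exact hle

end Unramified

section Solvability

theorem exists_normal_prime_index (G : Type*) [Group G] [Finite G] [Nontrivial G]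
    [Group.IsSolvable G] : ∃ N : Subgroup G, N.Normal ∧ N.index.Prime := by
  obtain ⟨M, hM, hle⟩ := (eq_top_or_exists_le_coatom (commutator G)).resolve_left
    (Group.IsSolvable.commutator_lt_top_of_nontrivial G).ne
  have hN : M.Normal := Subgroup.Normal.of_commutator_le _ hle
  let _ : CommGroup (G ⧸ M) :=
    { mul_comm := (hN.quotient_commutative_iff_commutator_le.mpr hle).is_comm.comm }
  have : Nontrivial (G ⧸ M) := QuotientGroup.nontrivial_iff.mpr hM.1
  have hsimple : IsSimpleGroup (G ⧸ M) :=
    { eq_bot_or_eq_top_of_normal := fun H _ => by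
        have hinj := Subgroup.comap_injective (QuotientGroup.mk'_surjective M)
        refine (hM.le_iff.mp (QuotientGroup.le_comap_mk' M H)).symm.imp (fun h => ?_) fun h => ?_
        · exact hinj (by rw [h, MonoidHom.comap_bot, QuotientGroup.ker_mk'])
        · exact hinj (by rw [h, Subgroup.comap_top]) }
  exact ⟨M, hN, CommGroup.is_simple_iff_prime_card.mp hsimple⟩

variable {F Γ G : Type*} [Field F] [LinearOrderedCommGroupWithZero Γ] {v : Valuation F Γ}
  [Group G] [MulSemiringAction G F]

theorem residue_natCast_eq_zero_iff (n : ℕ) :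
    (n : ResidueField v.valuationSubring) = 0 ↔ v (n : F) < 1 := by
  rw [← map_natCast (residue v.valuationSubring), residue_eq_zero_iff_lt_one]
  rfl

theorem valuation_card_lt_one [Finite G] [FaithfulSMul G F] [Nontrivial G]
    (h : ∀ (g : G) (x : F), x ≠ 0 → v (g • x - x) < v x) : v (Nat.card G : F) < 1 := by
  cases nonempty_fintype G
  have hle : v (Nat.card G : F) ≤ 1 := natCast_mem v.integer _
  by_contra hlt
  have hv : v (Nat.card G : F) = 1 := le_antisymm hle (not_lt.mp hlt)
  have hn : (Nat.card G : F) ≠ 0 := v.ne_zero_iff.mp (hv ▸ one_ne_zero)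
  let tr : F → F := fun z => ∑ g : G, g • z
  have htr (g : G) (z : F) : g • tr z = tr z := by
    simp only [tr, Finset.smul_sum, smul_smul]
    exact Fintype.sum_equiv (Equiv.mulLeft g) _ _ fun _ => rfl
  have hfixed {z : F} (hz : ∀ g : G, g • z = z) : tr z = Nat.card G * z := by
    simp [tr, hz]
  have hmul (g : G) (z : F) : g • (Nat.card G * z) = Nat.card G * g • z := by
    rw [← nsmul_eq_mul, smul_comm, nsmul_eq_mul]
  obtain ⟨g, hg⟩ := exists_ne (1 : G)
  obtain ⟨x, hx⟩ : ∃ x : F, g • x ≠ x := by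
    by_contra! hall
    exact hg (eq_of_smul_eq_smul fun x : F => by rw [hall, one_smul])
  set y := Nat.card G * x - tr x with hy
  have hy0 : y ≠ 0 := fun h0 => hx <| mul_left_cancel₀ hn <| by
    rw [← hmul, sub_eq_zero.mp h0, htr]
  have htry : tr y = 0 := by
    have : tr y = Nat.card G * tr x - tr (tr x) := by
      simp only [tr, hy, smul_sub, hmul, Finset.sum_sub_distrib, ← Finset.mul_sum]
    rw [this, hfixed fun g => htr g x, sub_self]
  have hlty : v (tr y - Nat.card G * y) < v y := by
    have : tr y - Nat.card G * y = ∑ g : G, (g • y - y) := by simp [tr]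
    rw [this]
    exact v.map_sum_lt (v.ne_zero_iff.mpr hy0) fun g _ => h g y hy0
  rw [htry, zero_sub, v.map_neg, map_mul, hv, one_mul] at hlty
  exact hlty.false

theorem isNilpotent_of_valuation_smul_sub_lt [Finite G] [FaithfulSMul G F]
    (h : ∀ (g : G) (x : F), x ≠ 0 → v (g • x - x) < v x) : Group.IsNilpotent G := by
  rcases subsingleton_or_nontrivial G with hG | hG
  · infer_instance
  set p := ringChar (ResidueField v.valuationSubring)
  have hdvd (H : Subgroup G) [Nontrivial H] : p ∣ Nat.card H := by
    rw [← ringChar.spec, residue_natCast_eq_zero_iff]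
    exact valuation_card_lt_one fun g => h g
  have hp : p.Prime :=
    (CharP.char_is_prime_or_zero (ResidueField v.valuationSubring) p).resolve_right
      fun h0 => Nat.card_pos.ne' (zero_dvd_iff.mp (h0 ▸ hdvd (⊤ : Subgroup G)))
  have := Fact.mk hp
  refine (IsPGroup.of_card (p := p) <| Nat.eq_prime_pow_of_unique_prime_dvd Nat.card_pos.ne'
    fun {l} hl hlG => ?_).isNilpotent
  have := Fact.mk hl
  obtain ⟨g, hg⟩ := exists_prime_orderOf_dvd_card' l hlG
  have : Nontrivial (Subgroup.zpowers g) := (Subgroup.nontrivial_iff_ne_bot _).mpr fun hbot => by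
    rw [Subgroup.zpowers_eq_bot.mp hbot, orderOf_one] at hg
    exact hl.ne_one hg.symm
  have := hdvd (Subgroup.zpowers g)
  rw [Nat.card_zpowers, hg] at this
  exact ((Nat.prime_dvd_prime_iff_eq hp hl).mp this).symm

theorem valuation_smul_div_self (hinv : ∀ (g : G) x, v (g • x) = v x) (g : G) (x : Fˣ) :
    v (g • (x : F) / x) = 1 := by
  rw [map_div₀, hinv, div_self (v.ne_zero_iff.mpr x.ne_zero)]

/-- For a group that fixes the residue field of an invariant valuation, `g ↦ (x ↦ g x / x mod 𝔪)` is
multiplicative. Its kernel is the wild ramification group. -/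
noncomputable def tameCharacter (hinv : ∀ (g : G) x, v (g • x) = v x)
    (hres : ∀ (g : G) x, v x ≤ 1 → v (g • x - x) < 1) :
    G →* (Fˣ → ResidueField v.valuationSubring) where
  toFun g x := residue v.valuationSubring ⟨g • (x : F) / x, (valuation_smul_div_self hinv g x).le⟩
  map_one' := funext fun x => by
    rw [Pi.one_apply, ← map_one (residue _)]
    exact congrArg _ (Subtype.ext (by simp))
  map_mul' g h := funext fun x => by
    rw [Pi.mul_apply, ← map_mul, ← sub_eq_zero, ← map_sub, residue_eq_zero_iff_lt_one]
    have hgx : g • (x : F) ≠ 0 := (smul_ne_zero_iff_ne g).mpr x.ne_zero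
    have hmul : (g * h) • (x : F) / x - g • (x : F) / x * (h • (x : F) / x) =
        g • (x : F) / x * (g • (h • (x : F) / x) - h • (x : F) / x) := by
      rw [smul_div₀', mul_smul]
      field_simp
    change v ((g * h) • (x : F) / x - g • (x : F) / x * (h • (x : F) / x)) < 1
    rw [hmul, map_mul, valuation_smul_div_self hinv, one_mul]
    exact hres g _ (valuation_smul_div_self hinv h x).le

theorem isSolvable_of_valuation_smul_sub_lt_one [Finite G] [FaithfulSMul G F]
    (hinv : ∀ (g : G) x, v (g • x) = v x) (hres : ∀ (g : G) x, v x ≤ 1 → v (g • x - x) < 1) :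
    Group.IsSolvable G := by
  set χ := (tameCharacter hinv hres).toHomUnits
  have hwild (g : χ.ker) (x : F) (hx : x ≠ 0) : v (g • x - x) < v x := by
    have hg : tameCharacter hinv hres g = 1 := by
      rw [← MonoidHom.mem_ker, ← MonoidHom.ker_toHomUnits]
      exact g.2
    have hgx := congrFun hg (Units.mk0 x hx)
    rw [Pi.one_apply, ← sub_eq_zero, ← map_one (residue _)] at hgx
    have hlt : v ((g : G) • x / x - 1) < 1 := (residue_eq_zero_iff_lt_one v _).mp hgx
    have hfactor : g • x - x = x * ((g : G) • x / x - 1) := by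
      rw [mul_sub, mul_div_cancel₀ _ hx, mul_one]
      rfl
    rw [hfactor, map_mul]
    exact mul_lt_of_lt_one_right (zero_lt_iff.mpr (v.ne_zero_iff.mpr hx)) hlt
  have := isNilpotent_of_valuation_smul_sub_lt hwild
  exact Group.isSolvable_of_ker_le_range χ.ker.subtype χ (by simp)

end Solvability

section PrimeDegree

variable {E F : Type*} [Field E] [Field F] [Algebra E F]

/-- In an extension of prime degree every element outside of the base field generates. -/
noncomputable def powerBasisOfFinrankPrime (hl : (Module.finrank E F).Prime) {α : F}
    (hα : α ∉ (algebraMap E F).range) : PowerBasis E F :=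
  have := Module.finite_of_finrank_pos hl.pos
  PowerBasis.ofAdjoinEqTop (Algebra.IsIntegral.isIntegral α) <|
    have := Subalgebra.isSimpleOrder_of_finrank_prime E F hl
    (eq_bot_or_eq_top (Algebra.adjoin E {α})).resolve_left fun h =>
      hα (Algebra.mem_bot.mp (h ▸ Algebra.self_mem_adjoin_singleton E α))

@[simp]
theorem powerBasisOfFinrankPrime_gen (hl : (Module.finrank E F).Prime) {α : F}
    (hα : α ∉ (algebraMap E F).range) : (powerBasisOfFinrankPrime hl hα).gen = α :=
  PowerBasis.ofAdjoinEqTop_gen ..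

end PrimeDegree

section Ramified

theorem exists_mem_forall_le_pow {Γ : Type*} [Monoid Γ] [Preorder Γ] [MulLeftMono Γ]
    [MulRightMono Γ] {P : Set Γ} (hP : P.Nonempty) (T : Finset Γ) (N : ℕ) :
    ∃ γ ∈ P, ∀ γ' ∈ P, γ ≤ γ' → ∀ t ∈ T, ∀ m ≤ N, t ≤ γ' ^ m → t ≤ γ ^ m := by
  classical
  let D (γ : Γ) : Finset (Γ × ℕ) := (T ×ˢ Finset.range (N + 1)).filter fun t => t.1 ≤ γ ^ t.2
  have hfin : (D '' P).Finite := (T ×ˢ Finset.range (N + 1)).powerset.finite_toSet.subset <| by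
    rintro _ ⟨γ, -, rfl⟩
    exact Finset.mem_powerset.mpr (Finset.filter_subset _ _)
  obtain ⟨γ, hγ⟩ := hfin.exists_maximalFor' D P hP
  refine ⟨γ, hγ.prop, fun γ' hγ' hle t ht m hm htm => ?_⟩
  have hD : D γ ≤ D γ' := Finset.monotone_filter_right _ fun _ _ h =>
    h.trans (pow_le_pow_left' hle _)
  have hmem : (t, m) ∈ D γ' := Finset.mem_filter.mpr
    ⟨Finset.mem_product.mpr ⟨ht, Finset.mem_range_succ_iff.mpr hm⟩, htm⟩
  exact (Finset.mem_filter.mp (hγ.2 hγ' hD hmem)).2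

variable {E F Γ : Type*} [Field E] [Field F] [Algebra E F] [LinearOrderedCommGroupWithZero Γ]
  {v : Valuation F Γ}

/-- The set `v(E)` of the values of the elements of `E`. -/
def baseValues (E : Type*) {F Γ : Type*} [Field E] [Field F] [Algebra E F]
    [LinearOrderedCommGroupWithZero Γ] (v : Valuation F Γ) : Set Γ :=
  {γ | ∃ e : E, v (algebraMap E F e) = γ}

theorem notMem_range_of_notMem_baseValues {y : F} (hy : v y ∉ baseValues E v) :
    y ∉ (algebraMap E F).range := by
  rintro ⟨e, rfl⟩
  exact hy ⟨e, rfl⟩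

theorem valuation_ne_zero_of_notMem_baseValues {y : F} (hy : v y ∉ baseValues E v) : v y ≠ 0 :=
  fun h => hy ⟨0, by rw [h, map_zero, map_zero]⟩

theorem valuation_pow_finrank_mem_baseValues [FiniteDimensional E F] [IsGalois E F]
    (hinv : ∀ (σ : F ≃ₐ[E] F) x, v (σ x) = v x) (y : F) :
    v y ^ Module.finrank E F ∈ baseValues E v := by
  refine ⟨Algebra.norm E y, ?_⟩
  simp only [Algebra.norm_eq_prod_automorphisms, map_prod, hinv]
  rw [Finset.prod_const, Finset.card_univ, ← Nat.card_eq_fintype_card, IsGalois.card_aut_eq_finrank]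

section

variable {l : ℕ} {y : F}

theorem valuation_mul_pow_notMem_baseValues (hl : l.Prime) (hy : v y ∉ baseValues E v)
    (hyl : v y ^ l ∈ baseValues E v) {c : E} (hc : c ≠ 0) {i : ℕ} (hi0 : 0 < i) (hil : i < l) :
    v (algebraMap E F c * y ^ i) ∉ baseValues E v := by
  rintro ⟨e, he⟩
  obtain ⟨n, hn⟩ := hyl
  obtain ⟨a, b, hab⟩ : IsCoprime (i : ℤ) l := Nat.isCoprime_iff_coprime.mpr
    (hl.coprime_iff_not_dvd.mpr (Nat.not_dvd_of_pos_of_lt hi0 hil)).symm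
  have hi : v (algebraMap E F (e / c)) = v y ^ i := by
    have hvc : v (algebraMap E F c) ≠ 0 := by simpa using hc
    rw [map_div₀, map_div₀, div_eq_iff hvc, mul_comm, ← map_pow, ← map_mul]
    exact he
  refine hy ⟨(e / c) ^ a * n ^ b, ?_⟩
  simp only [map_mul, map_zpow₀, hi, hn]
  rw [← zpow_natCast, ← zpow_natCast, ← zpow_mul, ← zpow_mul,
    ← zpow_add₀ (valuation_ne_zero_of_notMem_baseValues hy), mul_comm _ a, mul_comm _ b, hab,
    zpow_one]

theorem valuation_coeff_mul_pow_le (hl : l.Prime) (hy : v y ∉ baseValues E v)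
    (hyl : v y ^ l ∈ baseValues E v) {g : E[X]} (hg : g.natDegree < l) (i : ℕ) :
    v (algebraMap E F (g.coeff i) * y ^ i) ≤ v (aeval y g) := by
  rcases eq_or_ne g 0 with rfl | hg0
  · simp
  obtain ⟨j, hj, hmax⟩ := g.support.exists_max_image
    (fun k => v (algebraMap E F (g.coeff k) * y ^ k)) (support_nonempty.mpr hg0)
  have hne : ∀ a ∈ g.support, ∀ b ∈ g.support, a < b →
      v (algebraMap E F (g.coeff a) * y ^ a) ≠ v (algebraMap E F (g.coeff b) * y ^ b) := by
    intro a _ b hb hab h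
    refine valuation_mul_pow_notMem_baseValues hl hy hyl (mem_support_iff.mp hb)
      (Nat.sub_pos_of_lt hab)
      ((Nat.sub_le b a).trans_lt ((le_natDegree_of_mem_supp b hb).trans_lt hg))
      ⟨g.coeff a, ?_⟩
    rw [← Nat.sub_add_cancel hab.le, pow_add, ← mul_assoc, map_mul v, map_mul v _ (y ^ a),
      Nat.sub_add_cancel hab.le] at h
    refine mul_right_cancel₀ ?_ h
    exact map_pow v y a ▸ pow_ne_zero a (valuation_ne_zero_of_notMem_baseValues hy)
  have hlt : ∀ k ∈ g.support \ {j}, v (algebraMap E F (g.coeff k) * y ^ k) <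
      v (algebraMap E F (g.coeff j) * y ^ j) := by
    intro k hk
    rw [Finset.mem_sdiff, Finset.mem_singleton] at hk
    refine (hmax k hk.1).lt_of_ne ?_
    rcases lt_or_gt_of_ne hk.2 with h | h
    · exact hne k hk.1 j hj h
    · exact (hne j hj k hk.1 h).symm
  have hsum : v (aeval y g) = v (algebraMap E F (g.coeff j) * y ^ j) := by
    rw [aeval_def, eval₂_eq_sum, sum_def]
    exact v.map_sum_eq_of_lt hj hlt
  by_cases hi : i ∈ g.support
  · exact (hmax i hi).trans_eq hsum.symm
  · simp [notMem_support_iff.mp hi]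

theorem exists_valuation_mul_pow_eq (hl : l.Prime) (hyl : v y ^ l ∈ baseValues E v) {c : E} {n : ℕ}
    (h : v (algebraMap E F c * y ^ n) ∉ baseValues E v) :
    ∃ c' : E, c' ≠ 0 ∧ ∃ j ∈ Finset.Ioo 0 l,
      v (algebraMap E F c' * y ^ j) = v (algebraMap E F c * y ^ n) := by
  obtain ⟨e, he⟩ := hyl
  have heq : v (algebraMap E F (c * e ^ (n / l)) * y ^ (n % l)) = v (algebraMap E F c * y ^ n) := by
    conv_rhs => rw [← Nat.div_add_mod n l, pow_add, pow_mul]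
    simp only [map_mul, map_pow, he, mul_assoc]
  refine ⟨_, fun h0 => valuation_ne_zero_of_notMem_baseValues h ?_, n % l,
    Finset.mem_Ioo.mpr
      ⟨Nat.pos_of_ne_zero fun h0 => h ⟨c * e ^ (n / l), ?_⟩, Nat.mod_lt _ hl.pos⟩, heq⟩
  · rw [← heq, h0, map_zero, zero_mul, map_zero]
  · simpa [h0] using heq

-- If `v e > 1`, the value `t` of `e α ^ i` lies strictly between two consecutive powers of
-- `γ = v α`, say `γ ^ (m + 1) < t ≤ γ ^ m`, and `δ = t / γ ^ m > γ` has `t ≤ δ ^ (m + 1)`.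
theorem valuation_le_one_of_forall_le_pow {α : F} (hl : l.Prime) (hα : v α ∉ baseValues E v)
    (hαl : v α ^ l ∈ baseValues E v) {e : E} {i : ℕ} (hi : i < l)
    (ht : v (algebraMap E F e * α ^ i) ≤ 1)
    (hstab : ∀ k, v (algebraMap E F e * α ^ k) ∉ baseValues E v →
      v (algebraMap E F e * α ^ k) < 1 → v α ≤ v (algebraMap E F e * α ^ k) → ∀ m ≤ l,
      v (algebraMap E F e * α ^ i) ≤ v (algebraMap E F e * α ^ k) ^ m →
      v (algebraMap E F e * α ^ i) ≤ v α ^ m) :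
    v (algebraMap E F e) ≤ 1 := by
  classical
  by_contra! he
  have he0 : e ≠ 0 := by rintro rfl; simp at he
  have hα0 : 0 < v α := zero_lt_iff.mpr (valuation_ne_zero_of_notMem_baseValues hα)
  have hgt : ¬ v (algebraMap E F e * α ^ i) ≤ v α ^ i := by
    rw [map_mul, map_pow, not_le]
    exact lt_mul_of_one_lt_left (pow_pos hα0 i) he
  obtain ⟨m, hmi, hm, hm1⟩ : ∃ m < i, v (algebraMap E F e * α ^ i) ≤ v α ^ m ∧
      ¬ v (algebraMap E F e * α ^ i) ≤ v α ^ (m + 1) := by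
    by_contra! hall
    have hle (n : ℕ) (hn : n ≤ i) : v (algebraMap E F e * α ^ i) ≤ v α ^ n := by
      induction n with
      | zero => simpa using ht
      | succ n ih => exact hall n hn (ih (Nat.le_of_succ_le hn))
    exact hgt (hle i le_rfl)
  have hsplit : v (algebraMap E F e * α ^ i) = v α ^ m * v (algebraMap E F e * α ^ (i - m)) := by
    rw [← map_pow, ← map_mul v (α ^ m), mul_left_comm, ← pow_add, Nat.add_sub_cancel' hmi.le]
  have hδ : v (algebraMap E F e * α ^ (i - m)) ∉ baseValues E v :=
    valuation_mul_pow_notMem_baseValues hl hα hαl he0 (Nat.sub_pos_of_lt hmi)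
      ((Nat.sub_le i m).trans_lt hi)
  have hδ1 : v (algebraMap E F e * α ^ (i - m)) < 1 := by
    refine lt_of_le_of_ne ?_ fun h => hδ ⟨1, by simp [h]⟩
    rwa [hsplit, mul_le_iff_le_one_right (pow_pos hα0 m)] at hm
  have hγδ : v α ≤ v (algebraMap E F e * α ^ (i - m)) := by
    rw [hsplit, pow_succ, mul_le_mul_iff_right₀ (pow_pos hα0 m)] at hm1
    exact (not_le.mp hm1).le
  refine hm1 (hstab _ hδ hδ1 hγδ (m + 1) (by omega) ?_)
  rw [hsplit, pow_succ]
  gcongr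

theorem exists_valuation_le_one_of_finset {y : F} (hl : l.Prime) (hy : v y ∉ baseValues E v)
    (hyl : v y ^ l ∈ baseValues E v) (hy1 : v y < 1) (T : Finset Γ) :
    ∃ c : E, c ≠ 0 ∧ ∃ j ∈ Finset.Ioo 0 l, v (algebraMap E F c * y ^ j) < 1 ∧
      ∀ e : E, ∀ i < l, v (algebraMap E F e * (algebraMap E F c * y ^ j) ^ i) ∈ T →
        v (algebraMap E F e * (algebraMap E F c * y ^ j) ^ i) ≤ 1 → v (algebraMap E F e) ≤ 1 := by
  obtain ⟨γ, ⟨⟨c, hc, j, hj, rfl⟩, hγ1⟩, hstab⟩ := exists_mem_forall_le_pow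
    (P := {γ | (∃ c : E, c ≠ 0 ∧ ∃ j ∈ Finset.Ioo 0 l, v (algebraMap E F c * y ^ j) = γ) ∧ γ < 1})
    ⟨v y, ⟨1, one_ne_zero, 1, Finset.mem_Ioo.mpr ⟨one_pos, hl.one_lt⟩, by simp⟩, hy1⟩ T l
  obtain ⟨hj0, hjl⟩ := Finset.mem_Ioo.mp hj
  refine ⟨c, hc, j, hj, hγ1, fun e i hi hT ht => ?_⟩
  have hα := valuation_mul_pow_notMem_baseValues hl hy hyl hc hj0 hjl
  have hαl : v (algebraMap E F c * y ^ j) ^ l ∈ baseValues E v := by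
    obtain ⟨n, hn⟩ := hyl
    exact ⟨c ^ l * n ^ j, by simp only [map_mul, map_pow, hn, mul_pow, ← pow_mul, mul_comm]⟩
  refine valuation_le_one_of_forall_le_pow hl hα hαl hi ht fun k hk hk1 hle m hm => ?_
  refine hstab _ ⟨?_, hk1⟩ hle _ hT m hm
  have hform : algebraMap E F e * (algebraMap E F c * y ^ j) ^ k =
      algebraMap E F (e * c ^ k) * y ^ (j * k) := by
    rw [mul_pow, ← pow_mul, map_mul, map_pow, mul_assoc]
  rw [hform] at hk ⊢
  exact exists_valuation_mul_pow_eq hl hyl hk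

end

theorem memIntegralAdjoin_of_forall_le_one {y : F} {c : E} (hc : c ≠ 0) {g : E[X]}
    (h : ∀ i e, algebraMap E F e * (algebraMap E F c * y) ^ i = algebraMap E F (g.coeff i) * y ^ i →
      v (algebraMap E F e) ≤ 1) : MemIntegralAdjoin E v (algebraMap E F c * y) (aeval y g) := by
  have hcF : algebraMap E F c ≠ 0 := by simpa using hc
  refine ⟨g.comp (C c⁻¹ * X), fun i => h i _ ?_, ?_⟩
  · rw [comp_C_mul_X_coeff, map_mul, mul_assoc, map_pow, ← mul_pow, map_inv₀,
      inv_mul_cancel_left₀ hcF]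
  · rw [aeval_comp, map_mul, aeval_C, aeval_X, map_inv₀, inv_mul_cancel_left₀ hcF]

theorem isMonogenicallyExhausted_of_notMem_baseValues [IsGalois E F]
    (hl : (Module.finrank E F).Prime) (hinv : ∀ (σ : F ≃ₐ[E] F) x, v (σ x) = v x)
    {y : F} (hy : v y ∉ baseValues E v) (hy1 : v y < 1) : IsMonogenicallyExhausted E v := by
  classical
  set l := Module.finrank E F
  have := Module.finite_of_finrank_pos hl.pos
  have hvl (x : F) : v x ^ l ∈ baseValues E v := valuation_pow_finrank_mem_baseValues hinv x
  have hout : ∀ j ∈ Finset.Ioo 0 l, v (y ^ j) ∉ baseValues E v := fun j hj => by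
    rw [Finset.mem_Ioo] at hj
    simpa using valuation_mul_pow_notMem_baseValues hl hy (hvl y) one_ne_zero hj.1 hj.2
  intro S hS
  have hexp : ∀ j ∈ Finset.Ioo 0 l, ∀ s, ∃ g : E[X], g.natDegree < l ∧ aeval (y ^ j) g = s := by
    intro j hj s
    set pb := powerBasisOfFinrankPrime hl (notMem_range_of_notMem_baseValues (hout j hj)) with hpb
    obtain ⟨g, hg, hgs⟩ := pb.exists_eq_aeval s
    exact ⟨g, hg.trans_eq pb.finrank.symm, by rw [hgs, hpb, powerBasisOfFinrankPrime_gen]⟩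
  choose! g hgl hgs using hexp
  obtain ⟨c, hc, j, hj, hα1, hα⟩ := exists_valuation_le_one_of_finset hl hy (hvl y) hy1
    ((Finset.Ioo 0 l ×ˢ S ×ˢ Finset.range l).image fun t =>
      v (algebraMap E F ((g t.1 t.2.1).coeff t.2.2) * (y ^ t.1) ^ t.2.2))
  refine ⟨_, hα1.le, fun s hs => ?_⟩
  rw [← hgs j hj s]
  refine memIntegralAdjoin_of_forall_le_one hc fun i e he => ?_
  by_cases hi : i < l
  · refine hα e i hi ?_ ?_ <;> rw [he]
    · exact Finset.mem_image.mpr ⟨(j, s, i), by simp [hj, hs, hi], rfl⟩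
    · exact (valuation_coeff_mul_pow_le hl (hout j hj) (hvl _) (hgl j hj s) i).trans
        (by rw [hgs j hj s]; exact hS s hs)
  · rw [coeff_eq_zero_of_natDegree_lt ((hgl j hj s).trans_le (not_lt.mp hi)), map_zero,
      zero_mul] at he
    have hα0 : algebraMap E F c * y ^ j ≠ 0 := mul_ne_zero (by simpa using hc) <|
      v.ne_zero_iff.mp (valuation_ne_zero_of_notMem_baseValues (hout j hj))
    rw [(mul_eq_zero.mp he).resolve_right (pow_ne_zero i hα0), map_zero]
    exact zero_le_one

end Ramified

section InseparableResidue

theorem natDegree_minpoly_of_pow_mem_range {k K : Type*} [Field k] [Field K] [Algebra k K] {p : ℕ}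
    (hp : p.Prime) [CharP K p] {x : K} (hx : x ∉ (algebraMap k K).range)
    (hxp : x ^ p ∈ (algebraMap k K).range) : (minpoly k x).natDegree = p := by
  obtain ⟨n, hn⟩ := hxp
  have := Fact.mk hp
  have hirr : Irreducible (X ^ p - C n) := X_pow_sub_C_irreducible_of_prime hp fun b hb => hx ⟨b, by
    rw [← sub_eq_zero, ← pow_eq_zero_iff hp.ne_zero, sub_pow_char, ← map_pow, hb, hn, sub_self]⟩
  rw [← minpoly.eq_of_irreducible_of_monic hirr (by simp [hn]) (monic_X_pow_sub_C n hp.ne_zero),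
    natDegree_X_pow_sub_C]

variable {E F Γ : Type*} [Field E] [Field F] [Algebra E F] [LinearOrderedCommGroupWithZero Γ]
  {v : Valuation F Γ}

theorem charP_residueField_of_valuation_lt_one {l : ℕ} (hl : l.Prime) (hlv : v (l : F) < 1) :
    CharP (ResidueField v.valuationSubring) l :=
  (CharP.charP_iff_prime_eq_zero hl).mpr ((residue_natCast_eq_zero_iff l).mpr hlv)

theorem residue_pow_finrank_mem_range [FiniteDimensional E F] [IsGalois E F]
    (hinv : ∀ (σ : F ≃ₐ[E] F) x, v (σ x) = v x)
    (hres : ∀ (σ : F ≃ₐ[E] F) x, v x ≤ 1 → v (σ x - x) < 1) (x : v.valuationSubring) :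
    residue _ x ^ Module.finrank E F ∈ (algebraMap (ResidueField (baseValuationSubring E v))
      (ResidueField v.valuationSubring)).range := by
  let conj (σ : F ≃ₐ[E] F) : v.valuationSubring := ⟨σ x, (hinv σ x).trans_le x.2⟩
  have hconj (σ : F ≃ₐ[E] F) : residue _ (conj σ) = residue _ x := by
    rw [← sub_eq_zero, ← map_sub, residue_eq_zero_iff_lt_one]
    exact hres σ x x.2
  have hnorm :
      algebraMap E F (Algebra.norm E (x : F)) = ((∏ σ, conj σ : v.valuationSubring) : F) := by
    rw [Algebra.norm_eq_prod_automorphisms, SubmonoidClass.coe_finsetProd]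
  let n : baseValuationSubring E v :=
    ⟨Algebra.norm E (x : F), (congrArg v hnorm).trans_le (∏ σ, conj σ).2⟩
  refine ⟨residue _ n, ?_⟩
  have hn : algebraMap (baseValuationSubring E v) v.valuationSubring n = ∏ σ, conj σ :=
    Subtype.ext hnorm
  calc algebraMap _ _ (residue _ n) = residue _ (∏ σ, conj σ) := congrArg _ hn
    _ = residue _ x ^ Module.finrank E F := by
      simp only [map_prod, hconj]
      rw [Finset.prod_const, Finset.card_univ, ← Nat.card_eq_fintype_card,
        IsGalois.card_aut_eq_finrank]

theorem isMonogenicallyExhausted_of_residue_notMem_range [IsGalois E F]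
    (hl : (Module.finrank E F).Prime) (hinv : ∀ (σ : F ≃ₐ[E] F) x, v (σ x) = v x)
    (hres : ∀ (σ : F ≃ₐ[E] F) x, v x ≤ 1 → v (σ x - x) < 1)
    (hlv : v (Module.finrank E F : F) < 1) {x : v.valuationSubring}
    (hx : residue _ x ∉ (algebraMap (ResidueField (baseValuationSubring E v))
      (ResidueField v.valuationSubring)).range) : IsMonogenicallyExhausted E v := by
  have := Module.finite_of_finrank_pos hl.pos
  have := charP_residueField_of_valuation_lt_one hl hlv
  have hxE : (x : F) ∉ (algebraMap E F).range := by
    rintro ⟨e, he⟩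
    exact hx ⟨residue _ ⟨e, (congrArg v he).trans_le x.2⟩, congrArg (residue _) (Subtype.ext he)⟩
  refine .of_coeff_le (powerBasisOfFinrankPrime hl hxE) ?_ fun g hg i => ?_ <;>
    rw [powerBasisOfFinrankPrime_gen]
  · exact x.2
  refine valuation_coeff_le_of_natDegree_lt v x ?_ i
  rwa [natDegree_minpoly_of_pow_mem_range hl hx (residue_pow_finrank_mem_range hinv hres x),
    (powerBasisOfFinrankPrime hl hxE).finrank]

end InseparableResidue

section Immediate

theorem coeff_taylor_derivative {R : Type*} [CommRing R] (a : R) (g : R[X]) (k : ℕ) :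
    (taylor a (derivative g)).coeff k = (taylor a g).coeff (k + 1) * (k + 1) := by
  rw [← coeff_derivative]
  congr 1
  simp [taylor_apply, derivative_comp]

theorem aeval_sub_taylor {R S : Type*} [CommRing R] [CommRing S] [Algebra R S] (x : S) (a : R)
    (g : R[X]) : aeval (x - algebraMap R S a) (taylor a g) = aeval x g := by
  simp [taylor_apply, aeval_comp]

section Newton

variable {E Γ : Type*} [Field E] [LinearOrderedCommGroupWithZero Γ] {w : Valuation E Γ}

theorem valuation_eval_lt_one {g : E[X]} (hg : ∀ i, w (g.coeff i) < 1) {b : E} (hb : w b ≤ 1) :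
    w (g.eval b) < 1 := by
  rw [eval_eq_sum_range]
  refine w.map_sum_lt one_ne_zero fun i _ => ?_
  rw [map_mul, map_pow]
  exact (mul_le_of_le_one_right' (pow_le_one' hb i)).trans_lt (hg i)

-- The reduction of `h` is the linear polynomial `X + h₀`.
theorem IsHenselianValuation.exists_isRoot_of_coeff_one (hw : IsHenselianValuation w) {h : E[X]}
    (h0 : w (h.coeff 0) ≤ 1) (h1 : h.coeff 1 = 1) (hk : ∀ k > 1, w (h.coeff k) < 1) :
    ∃ z, h.IsRoot z := by
  obtain ⟨r, hr⟩ : ∃ r, r = h - (C (h.coeff 0) + X) := ⟨_, rfl⟩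
  have hrk : ∀ k, w (r.coeff k) < 1
    | 0 => by simp [hr]
    | 1 => by simp [hr, h1]
    | k + 2 => by simpa [hr, coeff_C, coeff_X] using hk (k + 2) (by omega)
  have hrk' (k : ℕ) : w ((derivative r).coeff k) < 1 := by
    rw [coeff_derivative, map_mul]
    refine (mul_le_of_le_one_right' ?_).trans_lt (hrk (k + 1))
    exact_mod_cast natCast_mem w.integer (k + 1)
  have hb : w (-h.coeff 0) ≤ 1 := (w.map_neg _).trans_le h0
  have heval : h.eval (-h.coeff 0) = r.eval (-h.coeff 0) := by simp [hr]
  have hderiv : h.derivative.eval (-h.coeff 0) = 1 + r.derivative.eval (-h.coeff 0) := by simp [hr]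
  have hint : ∀ k, w (h.coeff k) ≤ 1
    | 0 => h0
    | 1 => by rw [h1, map_one]
    | k + 2 => (hk (k + 2) (by omega)).le
  have hunit : w (h.derivative.eval (-h.coeff 0)) = 1 := by
    rw [hderiv, w.map_add_eq_of_lt_left, map_one]
    exact (valuation_eval_lt_one hrk' hb).trans_eq (map_one w).symm
  obtain ⟨z, hz, -⟩ := hw h hint _ hb (heval ▸ valuation_eval_lt_one hrk hb) hunit
  exact ⟨z, hz⟩

theorem IsHenselianValuation.exists_isRoot_of_taylor (hw : IsHenselianValuation w) {g : E[X]}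
    {a c : E} (h0 : w (g.eval a) ≤ w (g.derivative.eval a * c))
    (hk : ∀ k > 1, w ((taylor a g).coeff k * c ^ k) < w (g.derivative.eval a * c)) :
    ∃ z, g.IsRoot z := by
  set d := g.derivative.eval a * c
  have hd : 0 < w d := zero_le.trans_lt (hk 2 one_lt_two)
  have hd0 : d ≠ 0 := w.ne_zero_iff.mp hd.ne'
  let h := C d⁻¹ * (taylor a g).comp (C c * X)
  have hcoeff (k : ℕ) : h.coeff k = d⁻¹ * ((taylor a g).coeff k * c ^ k) := by
    rw [coeff_C_mul, comp_C_mul_X_coeff]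
  obtain ⟨z, hz⟩ := hw.exists_isRoot_of_coeff_one (h := h)
    (by rwa [hcoeff, map_mul, map_inv₀, inv_mul_le_iff₀ hd, mul_one, taylor_coeff_zero, pow_zero,
      mul_one])
    (by rw [hcoeff, taylor_coeff_one, pow_one, inv_mul_cancel₀ hd0])
    (fun k hk1 => by
      rw [hcoeff, map_mul, map_inv₀, inv_mul_lt_iff₀ hd, mul_one]
      exact hk k hk1)
  refine ⟨c * z + a, ?_⟩
  rw [IsRoot.def, eval_mul, eval_C, eval_comp, eval_mul, eval_C, eval_X, taylor_eval] at hz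
  exact (mul_eq_zero.mp hz).resolve_left (inv_ne_zero hd0)

end Newton

variable {E F Γ : Type*} [Field E] [Field F] [Algebra E F] [LinearOrderedCommGroupWithZero Γ]
  {v : Valuation F Γ} {x : F}

/-- The filter of the approximations of `x` by elements of `E`: a property holds eventually if it
holds for all `a` that are at least as close to `x` as some fixed `a₀`. -/
def approximationFilter (E : Type*) {F Γ : Type*} [Field E] [Field F] [Algebra E F]
    [LinearOrderedCommGroupWithZero Γ] (v : Valuation F Γ) (x : F) : Filter E :=
  ⨅ a₀ : E, .principal {a | v (x - algebraMap E F a) ≤ v (x - algebraMap E F a₀)}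

theorem hasBasis_approximationFilter : (approximationFilter E v x).HasBasis (fun _ => True)
    fun a₀ => {a | v (x - algebraMap E F a) ≤ v (x - algebraMap E F a₀)} :=
  Filter.hasBasis_iInf_principal fun a b =>
    (le_total (v (x - algebraMap E F a)) (v (x - algebraMap E F b))).elim
      (fun h => ⟨a, Set.Subset.rfl, fun _ hc => le_trans hc h⟩)
      (fun h => ⟨b, fun _ hc => le_trans hc h, Set.Subset.rfl⟩)

instance : (approximationFilter E v x).NeBot :=
  hasBasis_approximationFilter.neBot_iff.mpr fun {a₀} _ => ⟨a₀, le_rfl⟩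

theorem eventually_approximationFilter_lt {a₀ a₁ : E}
    (h : v (x - algebraMap E F a₁) < v (x - algebraMap E F a₀)) :
    ∀ᶠ a in approximationFilter E v x, v (x - algebraMap E F a) < v (x - algebraMap E F a₀) :=
  hasBasis_approximationFilter.eventually_iff.mpr ⟨a₁, trivial, fun _ ha => lt_of_le_of_lt ha h⟩

/-- In the Taylor expansion of `g(x)` at `a` the constant term has strictly larger value than all
other terms. -/
def IsTaylorDominatedAt (v : Valuation F Γ) (x : F) (g : E[X]) (a : E) : Prop :=
  ∀ k > 0, v (algebraMap E F ((taylor a g).coeff k) * (x - algebraMap E F a) ^ k) <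
    v (algebraMap E F (g.eval a))

namespace IsTaylorDominatedAt

variable {g h : E[X]} {a : E}

theorem eval_pos (hg : IsTaylorDominatedAt v x g a) : 0 < v (algebraMap E F (g.eval a)) :=
  zero_le.trans_lt (hg 1 one_pos)

theorem coeff_le (hg : IsTaylorDominatedAt v x g a) (k : ℕ) :
    v (algebraMap E F ((taylor a g).coeff k) * (x - algebraMap E F a) ^ k) ≤
      v (algebraMap E F (g.eval a)) := by
  rcases k.eq_zero_or_pos with rfl | hk
  · rw [taylor_coeff_zero, pow_zero, mul_one]
  · exact (hg k hk).le

theorem valuation_aeval_eq (hg : IsTaylorDominatedAt v x g a) :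
    v (aeval x g) = v (algebraMap E F (g.eval a)) := by
  rw [← aeval_sub_taylor x a, aeval_eq_sum_range]
  simp only [Algebra.smul_def]
  rw [v.map_sum_eq_of_lt (Finset.mem_range.mpr (Nat.succ_pos _))] <;>
    simp only [taylor_coeff_zero, pow_zero, mul_one]
  intro k hk
  rw [Finset.mem_sdiff, Finset.mem_singleton] at hk
  exact hg k (Nat.pos_of_ne_zero hk.2)

-- Rescaling the generator `x - a` to value one does not change the values of the Taylor terms, and
-- these are bounded by the value of `g(x)`.
theorem memIntegralAdjoin (hg : IsTaylorDominatedAt v x g a) {c : E} (hc0 : c ≠ 0)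
    (hc : v (algebraMap E F c) = v (x - algebraMap E F a)) (h1 : v (aeval x g) ≤ 1) :
    MemIntegralAdjoin E v (algebraMap E F c⁻¹ * (x - algebraMap E F a)) (aeval x g) := by
  have hgen : v (algebraMap E F c⁻¹ * (x - algebraMap E F a)) = 1 := by
    have hcv : v (algebraMap E F c) ≠ 0 := by simpa using hc0
    rw [map_mul, map_inv₀, map_inv₀, ← hc, inv_mul_cancel₀ hcv]
  rw [← aeval_sub_taylor x a]
  refine memIntegralAdjoin_of_forall_le_one (inv_ne_zero hc0) fun i e he => ?_
  have hve := congrArg v he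
  rw [map_mul v, map_pow, hgen, one_pow, mul_one] at hve
  rw [hve]
  exact (hg.coeff_le i).trans (hg.valuation_aeval_eq ▸ h1)

protected theorem C {c : E} (hc : c ≠ 0) : IsTaylorDominatedAt v x (C c) a := fun k hk => by
  simpa [coeff_C_of_ne_zero hk.ne', zero_lt_iff] using hc

theorem X_sub_C {z : E} (h : v (x - algebraMap E F a) < v (x - algebraMap E F z)) :
    IsTaylorDominatedAt v x (X - C z) a := by
  have hval : v (algebraMap E F a - algebraMap E F z) = v (x - algebraMap E F z) := by
    rw [← sub_sub_sub_cancel_left _ _ x]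
    exact v.map_sub_eq_of_lt_left h
  have htaylor : taylor a (X - C z) = X + C (a - z) := by
    rw [map_sub, taylor_X, taylor_C, C_sub, add_sub_assoc]
  intro k hk
  rw [eval_sub, eval_X, eval_C, map_sub (algebraMap E F), hval, htaylor, coeff_add,
    coeff_C_of_ne_zero hk.ne', add_zero, coeff_X]
  split_ifs with hk1
  · simpa [← hk1] using h
  · simpa using zero_le.trans_lt h

protected theorem mul (hg : IsTaylorDominatedAt v x g a) (hh : IsTaylorDominatedAt v x h a) :
    IsTaylorDominatedAt v x (g * h) a := fun k hk => by
  rw [taylor_mul, coeff_mul, map_sum, Finset.sum_mul, eval_mul, map_mul, map_mul v]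
  refine v.map_sum_lt (mul_ne_zero hg.eval_pos.ne' hh.eval_pos.ne') fun p hp => ?_
  have hadd : p.1 + p.2 = k := Finset.HasAntidiagonal.mem_antidiagonal.mp hp
  rw [← hadd, pow_add, map_mul (algebraMap E F), mul_mul_mul_comm, map_mul v]
  rcases p.1.eq_zero_or_pos with h1 | h1
  · have h2 : 0 < p.2 := by omega
    exact mul_lt_mul_of_le_of_lt_of_nonneg_of_pos (hg.coeff_le _) (hh _ h2) zero_le hg.eval_pos
  · exact mul_lt_mul_of_lt_of_le_of_nonneg_of_pos (hg _ h1) (hh.coeff_le _) zero_le hh.eval_pos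

theorem taylor_coeff_lt_of_derivative {l : ℕ} (hunit : ∀ k, 0 < k → k < l → v (k : F) = 1)
    (hg : g.natDegree < l) (hxa : x - algebraMap E F a ≠ 0)
    (hg' : IsTaylorDominatedAt v x (derivative g) a) {k : ℕ} (hk : 1 < k) :
    v (algebraMap E F ((taylor a g).coeff k) * (x - algebraMap E F a) ^ k) <
      v (algebraMap E F (g.derivative.eval a)) * v (x - algebraMap E F a) := by
  obtain ⟨k, rfl⟩ := Nat.exists_eq_succ_of_ne_zero (Nat.ne_zero_of_lt hk)
  rw [pow_succ, ← mul_assoc, map_mul v]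
  refine mul_lt_mul_of_pos_right ?_ (zero_lt_iff.mpr (v.ne_zero_iff.mpr hxa))
  by_cases hkl : k + 1 < l
  · have hcast : v (algebraMap E F (k + 1)) = 1 := by simpa using hunit (k + 1) k.succ_pos hkl
    have h := hg' k (by omega)
    rwa [coeff_taylor_derivative, map_mul (algebraMap E F), mul_right_comm, map_mul v, hcast,
      mul_one] at h
  · rw [coeff_eq_zero_of_natDegree_lt (by rw [natDegree_taylor]; omega), map_zero, zero_mul,
      map_zero]
    exact hg'.eval_pos

-- With `g'` dominated, the Taylor terms of `g` of degree at least two are smaller than the linear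
-- one; so either the constant term dominates, or Newton's method produces a root.
theorem of_derivative_or_exists_isRoot {l : ℕ} (hunit : ∀ k, 0 < k → k < l → v (k : F) = 1)
    (hw : IsHenselianValuation (v.comap (algebraMap E F))) (hg : g.natDegree < l)
    (hxa : x - algebraMap E F a ≠ 0) (hval : v (x - algebraMap E F a) ∈ baseValues E v)
    (hg' : IsTaylorDominatedAt v x (derivative g) a) :
    IsTaylorDominatedAt v x g a ∨ ∃ z, g.IsRoot z := by
  have hhigh (k : ℕ) (hk : 1 < k) := taylor_coeff_lt_of_derivative hunit hg hxa hg' hk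
  obtain ⟨c, hc⟩ := hval
  rcases lt_or_ge (v (algebraMap E F (g.derivative.eval a)) * v (x - algebraMap E F a))
    (v (algebraMap E F (g.eval a))) with hlt | hle
  · refine Or.inl fun k hk => ?_
    rcases (Nat.succ_le_of_lt hk).eq_or_lt' with rfl | hk1
    · rwa [taylor_coeff_one, pow_one, map_mul]
    · exact (hhigh k hk1).trans hlt
  · refine Or.inr (hw.exists_isRoot_of_taylor (a := a) (c := c) ?_ fun k hk => ?_) <;>
      simp only [Valuation.comap_apply, map_mul, map_pow, hc]
    · exact hle
    · simpa only [map_mul, map_pow] using hhigh k hk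

end IsTaylorDominatedAt

theorem derivative_ne_zero_of_natCast_ne_zero {R : Type*} [CommRing R] [IsDomain R] {g : R[X]}
    (hg : (g.natDegree : R) ≠ 0) : derivative g ≠ 0 := fun h => by
  obtain ⟨n, hn⟩ := Nat.exists_eq_succ_of_ne_zero (n := g.natDegree) fun h0 => hg (by simp [h0])
  have hcoeff : g.leadingCoeff * (n + 1 : ℕ) = 0 := by
    rw [leadingCoeff, hn, Nat.cast_succ, ← coeff_derivative, h, coeff_zero]
  rw [← Nat.succ_eq_add_one, ← hn, mul_eq_zero, leadingCoeff_eq_zero] at hcoeff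
  rcases hcoeff with rfl | h0
  · exact hg (by simp)
  · exact hg h0

theorem eventually_isTaylorDominatedAt {l : ℕ} (hunit : ∀ k, 0 < k → k < l → v (k : F) = 1)
    (hw : IsHenselianValuation (v.comap (algebraMap E F))) (hval : ∀ y : F, v y ∈ baseValues E v)
    (hlim : ∀ a : E, ∃ a' : E, v (x - algebraMap E F a') < v (x - algebraMap E F a)) {g : E[X]}
    (hg0 : g ≠ 0) (hgl : g.natDegree < l) :
    ∀ᶠ a in approximationFilter E v x, IsTaylorDominatedAt v x g a := by
  induction hn : g.natDegree using Nat.strong_induction_on generalizing g with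
  | _ n ih =>
  rcases n.eq_zero_or_pos with rfl | hn0
  · rw [eq_C_of_natDegree_eq_zero hn] at hg0 ⊢
    exact .of_forall fun a => .C (C_ne_zero.mp hg0)
  by_cases hroot : ∃ z, g.IsRoot z
  · obtain ⟨z, hz⟩ := hroot
    obtain ⟨q, rfl⟩ := dvd_iff_isRoot.mpr hz
    have hq0 : q ≠ 0 := right_ne_zero_of_mul hg0
    rw [natDegree_mul (X_sub_C_ne_zero z) hq0, natDegree_X_sub_C] at hn hgl
    obtain ⟨a', ha'⟩ := hlim z
    filter_upwards [eventually_approximationFilter_lt ha', ih _ (by omega) hq0 (by omega) rfl]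
      with a h1 h2 using (IsTaylorDominatedAt.X_sub_C h1).mul h2
  · have hcast : (g.natDegree : E) ≠ 0 := fun h0 => by
      have := hunit g.natDegree (hn ▸ hn0) hgl
      rw [← map_natCast (algebraMap E F), h0, map_zero, map_zero] at this
      exact zero_ne_one this
    have hlt : (derivative g).natDegree < g.natDegree := natDegree_derivative_lt (hn ▸ hn0.ne')
    have hg' : derivative g ≠ 0 := derivative_ne_zero_of_natCast_ne_zero hcast
    filter_upwards [ih _ (hn ▸ hlt) hg' (hlt.trans hgl) rfl] with a ha
    have hxa : x - algebraMap E F a ≠ 0 := fun h => by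
      obtain ⟨a', ha'⟩ := hlim a
      simp [h] at ha'
    exact (ha.of_derivative_or_exists_isRoot hunit hw hgl hxa (hval _)).resolve_right hroot

theorem isMonogenicallyExhausted_of_forall_exists_lt (hl : (Module.finrank E F).Prime)
    (hunit : ∀ k, 0 < k → k < Module.finrank E F → v (k : F) = 1)
    (hw : IsHenselianValuation (v.comap (algebraMap E F))) (hval : ∀ y : F, v y ∈ baseValues E v)
    (hlim : ∀ a : E, ∃ a' : E, v (x - algebraMap E F a') < v (x - algebraMap E F a)) :
    IsMonogenicallyExhausted E v := by
  have hxa (a : E) : v (x - algebraMap E F a) ≠ 0 := fun h => by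
    obtain ⟨a', ha'⟩ := hlim a
    simp [h] at ha'
  have hx : x ∉ (algebraMap E F).range := by
    rintro ⟨e, rfl⟩
    exact hxa e (by simp)
  let pb := powerBasisOfFinrankPrime hl hx
  have hexp (s : F) : ∃ g : E[X], g.natDegree < Module.finrank E F ∧ aeval x g = s := by
    obtain ⟨g, hg, rfl⟩ := pb.exists_eq_aeval s
    exact ⟨g, hg.trans_eq pb.finrank.symm, by rw [powerBasisOfFinrankPrime_gen]⟩
  choose g hgl hgs using hexp
  intro S hS
  have hdom : ∀ᶠ a in approximationFilter E v x,
      ∀ s ∈ S, g s ≠ 0 → IsTaylorDominatedAt v x (g s) a :=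
    (Filter.eventually_all_finset S).mpr fun s _ => Filter.eventually_imp_distrib_left.mpr fun h0 =>
      eventually_isTaylorDominatedAt hunit hw hval hlim h0 (hgl s)
  obtain ⟨a, ha⟩ := hdom.exists
  obtain ⟨c, hc⟩ := hval (x - algebraMap E F a)
  have hc0 : c ≠ 0 := fun h => hxa a (by rw [← hc, h, map_zero, map_zero])
  refine ⟨algebraMap E F c⁻¹ * (x - algebraMap E F a), ?_, fun s hs => ?_⟩
  · rw [map_mul, map_inv₀, map_inv₀, hc, inv_mul_cancel₀ (hxa a)]
  rw [← hgs s]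
  by_cases h0 : g s = 0
  · exact ⟨0, by simp, by simp [h0]⟩
  · exact (ha s hs h0).memIntegralAdjoin hc0 hc ((congrArg v (hgs s)).trans_le (hS s hs))

end Immediate

section PrimeDegreeStep

variable {E F Γ : Type*} [Field E] [Field F] [Algebra E F] [LinearOrderedCommGroupWithZero Γ]
  {v : Valuation F Γ}

theorem valuation_natCast_eq_one {l : ℕ} (hl : l.Prime) (hlv : v (l : F) < 1) {k : ℕ} (hk : 0 < k)
    (hkl : k < l) : v (k : F) = 1 := by
  have := charP_residueField_of_valuation_lt_one hl hlv
  refine le_antisymm (natCast_mem v.integer k) (not_lt.mp fun h => ?_)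
  rw [← residue_natCast_eq_zero_iff, CharP.cast_eq_zero_iff _ l] at h
  exact Nat.not_dvd_of_pos_of_lt hk hkl h

theorem valuation_map_sub_lt {σ : F ≃ₐ[E] F} (hres : ∀ x, v x ≤ 1 → v (σ x - x) < 1) {x : F}
    (hx : x ≠ 0) (hval : v x ∈ baseValues E v) : v (σ x - x) < v x := by
  obtain ⟨c, hc⟩ := hval
  have hx0 : 0 < v x := zero_lt_iff.mpr (v.ne_zero_iff.mpr hx)
  have h := hres (x / algebraMap E F c) (by rw [map_div₀, hc, div_self hx0.ne'])
  rwa [map_div₀, AlgEquiv.commutes, ← sub_div, map_div₀, hc, div_lt_one₀ hx0] at h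

theorem valuation_finrank_lt_one [FiniteDimensional E F] [IsGalois E F]
    (hl : 1 < Module.finrank E F) (hres : ∀ (σ : F ≃ₐ[E] F) x, v x ≤ 1 → v (σ x - x) < 1)
    (hval : ∀ y : F, v y ∈ baseValues E v) : v (Module.finrank E F : F) < 1 := by
  rw [← IsGalois.card_aut_eq_finrank] at hl ⊢
  have := Finite.one_lt_card_iff_nontrivial.mp hl
  exact valuation_card_lt_one fun σ x hx => valuation_map_sub_lt (hres σ) hx (hval x)

theorem exists_residue_notMem_range_of_forall_le {x : F} (hx : x ∉ (algebraMap E F).range)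
    (hval : ∀ y : F, v y ∈ baseValues E v) {a : E}
    (ha : ∀ a' : E, v (x - algebraMap E F a) ≤ v (x - algebraMap E F a')) :
    ∃ y : v.valuationSubring, residue _ y ∉ (algebraMap (ResidueField (baseValuationSubring E v))
      (ResidueField v.valuationSubring)).range := by
  have hxa : x - algebraMap E F a ≠ 0 := fun h => hx ⟨a, (sub_eq_zero.mp h).symm⟩
  obtain ⟨c, hc⟩ := hval (x - algebraMap E F a)
  have hx0 : 0 < v (x - algebraMap E F a) := zero_lt_iff.mpr (v.ne_zero_iff.mpr hxa)
  have hc0 : algebraMap E F c ≠ 0 := v.ne_zero_iff.mp (hc ▸ hx0.ne')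
  refine ⟨⟨(x - algebraMap E F a) / algebraMap E F c, ?_⟩, ?_⟩
  · exact (by rw [map_div₀, hc, div_self hx0.ne'] : v _ = 1).le
  rintro ⟨b, hb⟩
  obtain ⟨b, rfl⟩ := residue_surjective b
  have hlt : v ((x - algebraMap E F a) / algebraMap E F c - algebraMap E F b) < 1 :=
    (residue_eq_zero_iff_lt_one v
      (_ - algebraMap (baseValuationSubring E v) v.valuationSubring b)).mp
        ((map_sub _ _ _).trans (sub_eq_zero.mpr hb.symm))
  have heq : x - algebraMap E F (a + c * b) =
      algebraMap E F c * ((x - algebraMap E F a) / algebraMap E F c - algebraMap E F b) := by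
    rw [mul_sub, mul_div_cancel₀ _ hc0, map_add, map_mul, sub_add_eq_sub_sub]
  refine (ha (a + c * b)).not_gt ?_
  rw [heq, map_mul, hc]
  exact mul_lt_of_lt_one_right hx0 hlt

theorem IsHenselianValuation.isMonogenicallyExhausted_of_finrank_prime [IsGalois E F]
    (hw : IsHenselianValuation (v.comap (algebraMap E F))) (hl : (Module.finrank E F).Prime)
    (hinv : ∀ (σ : F ≃ₐ[E] F) x, v (σ x) = v x)
    (hres : ∀ (σ : F ≃ₐ[E] F) x, v x ≤ 1 → v (σ x - x) < 1) : IsMonogenicallyExhausted E v := by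
  have := Module.finite_of_finrank_pos hl.pos
  by_cases hval : ∀ y : F, v y ∈ baseValues E v
  · have hlv := valuation_finrank_lt_one hl.one_lt hres hval
    obtain ⟨x, hx⟩ : ∃ x : F, x ∉ (algebraMap E F).range := by
      by_contra! hall
      exact hl.ne_one (IntermediateField.bot_eq_top_iff_finrank_eq_one.mp
        (eq_top_iff.mpr fun x _ => IntermediateField.mem_bot.mpr (hall x)))
    by_cases hnear : ∃ a : E, ∀ a' : E, v (x - algebraMap E F a) ≤ v (x - algebraMap E F a')
    · obtain ⟨a, ha⟩ := hnear
      obtain ⟨y, hy⟩ := exists_residue_notMem_range_of_forall_le hx hval ha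
      exact isMonogenicallyExhausted_of_residue_notMem_range hl hinv hres hlv hy
    · push Not at hnear
      exact isMonogenicallyExhausted_of_forall_exists_lt hl
        (fun k hk hkl => valuation_natCast_eq_one hl hlv hk hkl) hw hval hnear
  · push Not at hval
    obtain ⟨y, hy⟩ := hval
    rcases lt_trichotomy (v y) 1 with hlt | heq | hgt
    · exact isMonogenicallyExhausted_of_notMem_baseValues hl hinv hy hlt
    · exact absurd ⟨1, by rw [map_one, map_one, heq]⟩ hy
    · refine isMonogenicallyExhausted_of_notMem_baseValues hl hinv (y := y⁻¹) ?_ ?_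
      · rintro ⟨e, he⟩
        exact hy ⟨e⁻¹, by rw [map_inv₀, map_inv₀, he, map_inv₀, inv_inv]⟩
      · rw [map_inv₀]
        exact inv_lt_one_of_one_lt₀ hgt

end PrimeDegreeStep

section IntegralExtension

section GroupAction

open Pointwise

variable {B : Type*} [CommRing B]

theorem exists_sub_one_mem_of_isMaximal (G : Type*) [Group G] [Finite G] [MulSemiringAction G B]
    (M : Ideal B) [hM : M.IsMaximal] :
    ∃ b, b - 1 ∈ M ∧ ∀ g : G, g • M ≠ M → g • b ∈ M := by
  classical
  have := Fintype.ofFinite G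
  obtain ⟨y, hy, hyM⟩ : ∃ y ∈ Finset.univ.inf fun g : {g : G // g • M ≠ M} => g.1⁻¹ • M, y ∉ M := by
    refine Set.not_subset.mp fun hle => ?_
    obtain ⟨⟨g, hg⟩, -, hgM⟩ := (Ideal.IsPrime.inf_le' hM.isPrime).mp hle
    have hmax : (g⁻¹ • M).IsMaximal := by
      rw [Ideal.pointwise_smul_eq_comap]
      exact Ideal.comap_isMaximal_of_equiv (MulSemiringAction.toRingEquiv G B g⁻¹⁻¹)
    exact hg (inv_smul_eq_iff.mp (hmax.eq_of_le hM.ne_top hgM)).symm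
  obtain ⟨z, m, hm, hzm⟩ := hM.exists_inv hyM
  refine ⟨z * y, ?_, fun g hg => ?_⟩
  · rw [← hzm, sub_add_cancel_left]
    exact M.neg_mem hm
  · have hgy : y ∈ g⁻¹ • M := Submodule.mem_finsetInf.mp hy ⟨g, hg⟩ (Finset.mem_univ _)
    rw [smul_mul']
    exact M.mul_mem_left _ (Ideal.mem_inv_pointwise_smul_iff.mp hgy)

theorem exists_stabilizer_smul_eq_of_isMaximal (G : Type*) [Group G] [Finite G]
    [MulSemiringAction G B] (M : Ideal B) [hM : M.IsMaximal] :
    ∃ c, c - 1 ∈ M ∧ (∀ g : G, g • M = M → g • c = c) ∧ ∀ g : G, g • M ≠ M → g • c ∈ M := by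
  classical
  have := Fintype.ofFinite (MulAction.stabilizer G M)
  obtain ⟨b, hb, hbM⟩ := exists_sub_one_mem_of_isMaximal G M
  refine ⟨∏ h : MulAction.stabilizer G M, h • b, ?_, fun g hg => ?_, fun g hg => ?_⟩
  · rw [← Ideal.Quotient.mk_eq_mk_iff_sub_mem, map_one, map_prod]
    refine Finset.prod_eq_one fun h _ => ?_
    have hmem : h • (b - 1) ∈ M :=
      (MulAction.mem_stabilizer_iff.mp h.2).le (Ideal.smul_mem_pointwise_smul h.1 _ M hb)
    rwa [← map_one (Ideal.Quotient.mk M), Ideal.Quotient.mk_eq_mk_iff_sub_mem, ← smul_one h,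
      ← smul_sub]
  · rw [Finset.smul_prod']
    exact Fintype.prod_equiv (Equiv.mulLeft (⟨g, hg⟩ : MulAction.stabilizer G M)) _ _ fun k =>
      (mul_smul g k.1 b).symm
  · rw [Finset.smul_prod', ← Finset.mul_prod_erase _ _ (Finset.mem_univ 1), one_smul]
    exact M.mul_mem_right _ (hbM g hg)

theorem map_prodXSubSMul_eq (G : Type*) [Group G] [Fintype G] [MulSemiringAction G B]
    {M : Ideal B} {c : B} (hc : c - 1 ∈ M) (hcM : ∀ g : G, g • c ≠ c → g • c ∈ M) :
    ∃ k : ℕ, (prodXSubSMul G B c).map (Ideal.Quotient.mk M) = (X - 1) * X ^ k := by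
  classical
  refine ⟨(Finset.univ.erase ((1 : G) : G ⧸ MulAction.stabilizer G c)).card, ?_⟩
  rw [prodXSubSMul, Polynomial.map_prod,
    ← Finset.mul_prod_erase _ _ (Finset.mem_univ ((1 : G) : G ⧸ MulAction.stabilizer G c)),
    Finset.prod_eq_pow_card (b := X)]
  · rw [MulAction.ofQuotientStabilizer_mk, one_smul, Polynomial.map_sub, map_X, map_C,
      (Ideal.Quotient.mk_eq_mk_iff_sub_mem _ _).mpr hc, map_one, C_1]
  · intro q hq
    obtain ⟨g, rfl⟩ := QuotientGroup.mk_surjective q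
    have hg : g • c ≠ c := fun h => (Finset.mem_erase.mp hq).1 <|
      (QuotientGroup.eq.mpr (by simpa using inv_mem (MulAction.mem_stabilizer_iff.mpr h))).symm
    rw [MulAction.ofQuotientStabilizer_mk, Polynomial.map_sub, map_X, map_C,
      Ideal.Quotient.eq_zero_iff_mem.mpr (hcM g hg), C_0, sub_zero]

variable {A G : Type*} [CommRing A] [HenselianLocalRing A] [IsDomain B] [Algebra A B]
  [Group G] [Finite G] [MulSemiringAction G B] [SMulCommClass G A B] [Algebra.IsInvariant A B G]

/- Modulo `M` the polynomial `∏ (X - g • c)` over the orbit of `c` is `(X - 1) X ^ k`, so one of its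
roots lies in `A` by Hensel's lemma. -/
theorem mem_range_algebraMap_of_smul_mem {M : Ideal B} [M.IsMaximal] {c : B} (hc : c - 1 ∈ M)
    (hcM : ∀ g : G, g • c ≠ c → g • c ∈ M) : c ∈ (algebraMap A B).range := by
  have := Fintype.ofFinite G
  have := Algebra.IsInvariant.isIntegral A B G
  have hmem (a : A) : a ∈ maximalIdeal A ↔ Ideal.Quotient.mk M (algebraMap A B a) = 0 := by
    rw [← eq_maximalIdeal (Ideal.isMaximal_comap_of_isIntegral_of_isMaximal (R := A) M),
      Ideal.mem_comap, Ideal.Quotient.eq_zero_iff_mem]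
  have hlifts : prodXSubSMul G B c ∈ lifts (algebraMap A B) :=
    (lifts_iff_coeff_lifts _).mpr fun n =>
      Algebra.IsInvariant.isInvariant (G := G) _ fun g => prodXSubSMul.coeff G B c g n
  obtain ⟨p, hpf, -, hp⟩ := lifts_and_natDegree_eq_and_monic hlifts (prodXSubSMul.monic G B c)
  obtain ⟨k, hk⟩ := map_prodXSubSMul_eq G hc hcM
  have heval (q : A[X]) : Ideal.Quotient.mk M (algebraMap A B (q.eval 1)) =
      ((q.map (algebraMap A B)).map (Ideal.Quotient.mk M)).eval 1 := by
    rw [eval_one_map, eval_one_map]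
  obtain ⟨a, ha, -⟩ := HenselianLocalRing.is_henselian p hp 1
    ((hmem _).mpr (by rw [heval, hpf, hk]; simp))
    ((residue_ne_zero_iff_isUnit _).mp fun h => by
      rw [residue_eq_zero_iff, hmem, heval, ← derivative_map, ← derivative_map, hpf, hk] at h
      simp at h)
  have hroot : (prodXSubSMul G B c).eval (algebraMap A B a) = 0 := by
    rw [← hpf, eval_map_algebraMap, aeval_algebraMap_apply_eq_algebraMap_eval, ha, map_zero]
  rw [prodXSubSMul, eval_prod, Finset.prod_eq_zero_iff] at hroot
  obtain ⟨q, -, hq⟩ := hroot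
  obtain ⟨g, rfl⟩ := QuotientGroup.mk_surjective q
  rw [MulAction.ofQuotientStabilizer_mk, eval_sub, eval_X, eval_C, sub_eq_zero] at hq
  exact ⟨a, by rw [← inv_smul_smul g c, ← hq, smul_algebraMap]⟩

theorem isLocalRing_of_isInvariant (A B G : Type*) [CommRing A] [HenselianLocalRing A]
    [CommRing B] [IsDomain B] [Algebra A B] [Group G] [Finite G] [MulSemiringAction G B]
    [SMulCommClass G A B] [Algebra.IsInvariant A B G] : IsLocalRing B := by
  have := Algebra.IsInvariant.isIntegral A B G
  obtain ⟨M, hM⟩ := Ideal.exists_maximal B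
  refine IsLocalRing.of_unique_max_ideal ⟨M, hM, fun M' hM' => ?_⟩
  have hunder (I : Ideal B) [I.IsMaximal] : I.under A = maximalIdeal A :=
    eq_maximalIdeal (Ideal.isMaximal_comap_of_isIntegral_of_isMaximal I)
  obtain ⟨g, rfl⟩ := Algebra.IsInvariant.exists_smul_of_under_eq A B G M M'
    ((hunder M).trans (hunder M').symm)
  by_contra hg
  obtain ⟨c, hc, hstab, hcM⟩ := exists_stabilizer_smul_eq_of_isMaximal G M
  obtain ⟨a, rfl⟩ := mem_range_algebraMap_of_smul_mem (A := A) hc fun g hne =>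
    hcM g fun h => hne (hstab g h)
  have ha := hcM g hg
  rw [smul_algebraMap] at ha
  exact hM.ne_top ((Ideal.eq_top_iff_one M).mpr (by simpa using M.sub_mem ha hc))

end GroupAction

theorem isLocalRing_integralClosure_of_isGalois (A K L : Type*) [CommRing A] [IsDomain A]
    [HenselianLocalRing A] [IsIntegrallyClosed A] [Field K] [Algebra A K] [IsFractionRing A K]
    [Field L] [Algebra K L] [Algebra A L] [IsScalarTower A K L] [IsGalois K L]
    [FiniteDimensional K L] : IsLocalRing (integralClosure A L) := by
  have := integralClosure.isFractionRing_of_finite_extension K L (A := A)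
  have := Algebra.isInvariant_of_isGalois' A K L (integralClosure A L)
  have := Finite.of_equiv _ (galRestrict A K L (integralClosure A L)).toEquiv
  exact isLocalRing_of_isInvariant A (integralClosure A L) Gal(integralClosure A L/A)

section NormalExtension

variable {A : Type*} (K : Type*) {Ω : Type*} [CommRing A] [IsDomain A] [HenselianLocalRing A]
  [Field K] [Algebra A K] [IsFractionRing A K] [Field Ω] [Algebra K Ω] [Algebra A Ω]
  [IsScalarTower A K Ω] [Normal K Ω]

theorem isUnit_or_isUnit_one_sub_of_isSeparable [IsIntegrallyClosed A] {x : integralClosure A Ω}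
    (hx : IsSeparable K (x : Ω)) : IsUnit x ∨ IsUnit (1 - x) := by
  let N := IntermediateField.adjoin K ((minpoly K (x : Ω)).rootSet Ω)
  have : IsSplittingField K N (minpoly K (x : Ω)) :=
    IntermediateField.adjoin_rootSet_isSplittingField (Normal.splits' _)
  have := IsGalois.of_separable_splitting_field (E := N) hx
  have := IsSplittingField.finiteDimensional N (minpoly K (x : Ω))
  have := isLocalRing_integralClosure_of_isGalois A K N
  have hxN : (x : Ω) ∈ N := IntermediateField.subset_adjoin _ _ <| mem_rootSet.mpr
    ⟨minpoly.ne_zero (Algebra.IsIntegral.isIntegral _), minpoly.aeval _ _⟩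
  let y : integralClosure A N := ⟨⟨x, hxN⟩, (isIntegral_algHom_iff
    (N.val.restrictScalars A) Subtype.val_injective).mp x.2⟩
  have hy : (N.val.restrictScalars A).mapIntegralClosure y = x := rfl
  rw [← hy, ← map_one (N.val.restrictScalars A).mapIntegralClosure, ← map_sub]
  exact (isUnit_or_isUnit_one_sub_self y).imp (·.map _) (·.map _)

theorem isLocalRing_integralClosure_of_normal (A Ω : Type*) [CommRing A] [IsDomain A]
    [HenselianLocalRing A] [IsIntegrallyClosed A] [Algebra A K] [IsFractionRing A K] [Field Ω]
    [Algebra K Ω] [Algebra A Ω] [IsScalarTower A K Ω] [Normal K Ω] :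
    IsLocalRing (integralClosure A Ω) := by
  refine IsLocalRing.of_isUnit_or_isUnit_one_sub_self fun x => ?_
  obtain ⟨q, hq⟩ := ExpChar.exists K
  have : ExpChar Ω q := expChar_of_injective_algebraMap (algebraMap K Ω).injective q
  have : ExpChar (separableClosure K Ω) q :=
    expChar_of_injective_algebraMap (algebraMap K _).injective q
  obtain ⟨n, y, hy⟩ := IsPurelyInseparable.pow_mem (separableClosure K Ω) q (x : Ω)
  have hpow : (1 - x) ^ q ^ n = 1 - x ^ q ^ n := Subtype.ext <| by
    push_cast
    rw [sub_pow_expChar_pow, one_pow]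
  have hn : q ^ n ≠ 0 := pow_ne_zero n (expChar_pos K q).ne'
  rw [← isUnit_pow_iff hn, ← isUnit_pow_iff (a := 1 - x) hn, hpow]
  exact isUnit_or_isUnit_one_sub_of_isSeparable K (x := x ^ q ^ n) <| by
    rw [SubmonoidClass.coe_pow, ← hy]
    exact mem_separableClosure_iff.mp y.2

end NormalExtension

theorem mem_range_or_inv_mem_range_of_map_residue_ne_zero {R F : Type*} [CommRing R] [IsLocalRing R]
    [Field F] [Algebra R F] [IsIntegrallyClosedIn R F] {x : F} {p : R[X]} (h0 : aeval x p = 0)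
    (hp : p.map (residue R) ≠ 0) : x ∈ (algebraMap R F).range ∨ x⁻¹ ∈ (algebraMap R F).range := by
  induction hn : p.natDegree using Nat.strong_induction_on generalizing p with | _ d ih
  obtain ⟨y, hy⟩ := IsIntegrallyClosedIn.isIntegral_iff.mp (isIntegral_leadingCoeff_smul p x h0)
  rw [Algebra.smul_def] at hy
  by_cases ha : IsUnit p.leadingCoeff
  · obtain ⟨u, hu⟩ := ha
    exact .inl ⟨↑u⁻¹ * y, by
      rw [map_mul, hy, ← hu, ← mul_assoc, ← map_mul, u.inv_mul, map_one, one_mul]⟩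
  by_cases hyu : IsUnit y
  · obtain ⟨u, rfl⟩ := hyu
    refine .inr ⟨p.leadingCoeff * ↑u⁻¹, eq_inv_of_mul_eq_one_left ?_⟩
    rw [map_mul, mul_right_comm, ← hy, ← map_mul, u.mul_inv, map_one]
  rw [← mem_nonunits_iff, ← mem_maximalIdeal, ← residue_eq_zero_iff] at ha hyu
  rcases d with _ | n
  · rw [eq_C_of_natDegree_eq_zero hn, leadingCoeff_C] at ha
    rw [eq_C_of_natDegree_eq_zero hn, map_C, ha, C_0] at hp
    exact absurd rfl hp
  have hsplit := eraseLead_add_C_mul_X_pow p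
  rw [hn] at hsplit
  have hmap : (p.eraseLead + C y * X ^ n).map (residue R) = p.map (residue R) := by
    conv_rhs => rw [← hsplit]
    simp [ha, hyu]
  have hdeg : (p.eraseLead + C y * X ^ n).natDegree ≤ n :=
    natDegree_add_le_of_degree_le ((eraseLead_natDegree_le p).trans (by lia))
      (natDegree_C_mul_X_pow_le y n)
  refine ih _ (Nat.lt_succ_of_le hdeg) ?_ (hmap ▸ hp) rfl
  rw [← h0]
  conv_rhs => rw [← hsplit]
  simp only [map_add, map_mul, aeval_C, map_pow, aeval_X, hy]
  ring

theorem isIntegral_or_isIntegral_inv (A K : Type*) {Ω : Type*} [CommRing A] [IsDomain A]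
    [ValuationRing A] [Field K] [Algebra A K] [IsFractionRing A K] [Field Ω] [Algebra K Ω]
    [Algebra A Ω] [IsScalarTower A K Ω] [Algebra.IsAlgebraic K Ω]
    [IsLocalRing (integralClosure A Ω)] (x : Ω) : IsIntegral A x ∨ IsIntegral A x⁻¹ := by
  obtain ⟨c, hc, q, hq, hq0⟩ := exists_eq_C_mul_map_residue_ne_zero A
    (minpoly.ne_zero (Algebra.IsIntegral.isIntegral (R := K) x))
  have h0 : aeval x q = 0 := by
    have := minpoly.aeval K x
    rw [hq] at this
    simpa [hc] using this
  have hres : (q.map (algebraMap A (integralClosure A Ω))).map (residue _) ≠ 0 := by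
    obtain ⟨i, hi⟩ := not_forall.mp fun h => hq0 (Polynomial.ext h)
    rw [coeff_map, coeff_zero, ← Ne, residue_ne_zero_iff_isUnit] at hi
    intro h
    have hu := (residue_ne_zero_iff_isUnit _).mpr (hi.map (algebraMap A (integralClosure A Ω)))
    rw [← coeff_map, ← coeff_map, h] at hu
    exact hu rfl
  have := mem_range_or_inv_mem_range_of_map_residue_ne_zero
    ((aeval_map_algebraMap _ x q).trans h0) hres
  exact this.imp (fun ⟨y, hy⟩ => hy ▸ y.2) fun ⟨y, hy⟩ => hy ▸ y.2

end IntegralExtension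

section IntegralClosureValuation

theorem exists_valuationSubring_valuation_le_one_iff (A K Ω : Type*) [CommRing A] [IsDomain A]
    [ValuationRing A] [HenselianLocalRing A] [Field K] [Algebra A K] [IsFractionRing A K] [Field Ω]
    [Algebra K Ω] [Algebra A Ω] [IsScalarTower A K Ω] [Normal K Ω] :
    ∃ V : ValuationSubring Ω, ∀ x, V.valuation x ≤ 1 ↔ IsIntegral A x := by
  have := isLocalRing_integralClosure_of_normal K A Ω
  exact ⟨⟨(integralClosure A Ω).toSubring, isIntegral_or_isIntegral_inv A K⟩,
    fun x => ValuationSubring.valuation_le_one_iff _ x⟩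

variable {F Γ : Type*} [Field F] [LinearOrderedCommGroupWithZero Γ] {v : Valuation F Γ}

theorem valuation_le_map_of_isAlgebraic {K : Type*} [Field K] [Algebra K F]
    [Algebra.IsAlgebraic K F] (σ : F ≃ₐ[K] F) (hσ : (v.comap (σ : F →+* F)).IsEquiv v) (x : F) :
    v x ≤ v (σ x) := by
  by_contra! hlt
  have hanti : StrictAnti fun n : ℕ => v (σ^[n] x) := strictAnti_nat_of_succ_lt fun n => by
    induction n with
    | zero => exact hlt
    | succ n ih =>
      rw [Function.iterate_succ_apply' _ (n + 1), Function.iterate_succ_apply' _ n]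
      rw [Function.iterate_succ_apply' _ n] at ih
      exact hσ.lt_iff_lt.mpr ih
  have hroot (n : ℕ) : σ^[n] x ∈ (minpoly K x).rootSet F := by
    refine mem_rootSet.mpr ⟨minpoly.ne_zero (Algebra.IsIntegral.isIntegral x), ?_⟩
    induction n with
    | zero => exact minpoly.aeval K x
    | succ n ih =>
      rw [Function.iterate_succ_apply', aeval_algEquiv, AlgHom.comp_apply, ih, map_zero]
  exact Set.infinite_of_injective_forall_mem (fun m n h => hanti.injective (congrArg v h)) hroot
    (rootSet_finite _ _)

theorem valuation_map_eq_of_le_one_iff_isIntegral {A K : Type*} [CommRing A] [Field K] [Algebra A K]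
    [Algebra K F] [Algebra A F] [IsScalarTower A K F] [Algebra.IsAlgebraic K F]
    (hv : ∀ x, v x ≤ 1 ↔ IsIntegral A x) (σ : F ≃ₐ[K] F) (x : F) : v (σ x) = v x := by
  have hequiv (τ : F ≃ₐ[K] F) : (v.comap (τ : F →+* F)).IsEquiv v :=
    Valuation.isEquiv_of_val_le_one fun y =>
      (hv (τ y)).trans ((isIntegral_algEquiv (τ.restrictScalars A)).trans (hv y).symm)
  refine le_antisymm ?_ (valuation_le_map_of_isAlgebraic σ (hequiv σ) x)
  simpa using valuation_le_map_of_isAlgebraic σ.symm (hequiv σ.symm) (σ x)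

-- If no root were close to `b`, then `g'(b) / g(b) = ∑ 1 / (b - z)` would be integral.
theorem exists_isRoot_valuation_sub_lt_one {g : F[X]} (hg : g.Splits) {b : F}
    (h0 : v (g.eval b) < 1) (h1 : v (g.derivative.eval b) = 1) :
    ∃ ρ, g.IsRoot ρ ∧ v (ρ - b) < 1 := by
  by_cases hb : g.eval b = 0
  · exact ⟨b, hb, by simp⟩
  by_contra! hroots
  have hsum : (g.roots.map fun z => 1 / (b - z)).sum ∈ v.integer := by
    refine multiset_sum_mem _ fun c hc => ?_
    obtain ⟨z, hz, rfl⟩ := Multiset.mem_map.mp hc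
    have hbz := hroots z (isRoot_of_mem_roots hz)
    rw [Valuation.map_sub_swap] at hbz
    rw [Valuation.mem_integer_iff, map_div₀, map_one]
    exact div_le_one_of_le₀ hbz zero_le
  rw [← hg.eval_derivative_div_eval_of_ne_zero hb, Valuation.mem_integer_iff, map_div₀, h1,
    div_le_one₀ (by simpa [zero_lt_iff] using hb)] at hsum
  exact hsum.not_gt h0

theorem exists_map_valuationSubring_eq {g : F[X]} (hg : ∀ i, v (g.coeff i) ≤ 1) :
    ∃ p : v.valuationSubring[X], p.map (algebraMap v.valuationSubring F) = g :=
  (mem_lifts _).mp ((lifts_iff_coeff_lifts g).mpr fun i => ⟨⟨_, hg i⟩, rfl⟩)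

theorem eval_map_valuationSubring (p : v.valuationSubring[X]) (x : v.valuationSubring) :
    (p.map (algebraMap v.valuationSubring F)).eval (x : F) = (p.eval x : v.valuationSubring) :=
  eval_map_apply (algebraMap v.valuationSubring F) x

theorem valuation_eval_sub_eval_le {g : F[X]} (hg : ∀ i, v (g.coeff i) ≤ 1) {x y : F}
    (hx : v x ≤ 1) (hy : v y ≤ 1) : v (g.eval x - g.eval y) ≤ v (x - y) := by
  obtain ⟨p, rfl⟩ := exists_map_valuationSubring_eq hg
  lift x to v.valuationSubring using hx
  lift y to v.valuationSubring using hy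
  obtain ⟨c, hc⟩ := sub_dvd_eval_sub x y p
  rw [eval_map_valuationSubring, eval_map_valuationSubring, ← AddSubgroupClass.coe_sub, hc,
    MulMemClass.coe_mul, map_mul, AddSubgroupClass.coe_sub]
  exact mul_le_of_le_one_right' c.2

theorem eq_of_isRoot_of_valuation_sub_lt_one {g : F[X]} (hg : ∀ i, v (g.coeff i) ≤ 1) {x y : F}
    (hx : v x ≤ 1) (hy : v y ≤ 1) (hxy : v (x - y) < 1) (h1 : v (g.derivative.eval x) = 1)
    (hx0 : g.IsRoot x) (hy0 : g.IsRoot y) : x = y := by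
  obtain ⟨p, rfl⟩ := exists_map_valuationSubring_eq hg
  lift x to v.valuationSubring using hx
  lift y to v.valuationSubring using hy
  rw [IsRoot, eval_map_valuationSubring] at hx0 hy0
  rw [derivative_map, eval_map_valuationSubring] at h1
  refine congrArg Subtype.val (IsLocalRing.eq_of_eval_eq_zero_of_not_isUnit_sub
    (Subtype.ext hx0) (Subtype.ext hy0) ?_ ?_)
  · rw [← residue_ne_zero_iff_isUnit, not_not, residue_eq_zero_iff_lt_one]
    exact hxy
  · rw [← residue_ne_zero_iff_isUnit, Ne, residue_eq_zero_iff_lt_one]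
    exact h1.not_lt

theorem valuation_coeff_derivative_le_one {g : F[X]} (hg : ∀ i, v (g.coeff i) ≤ 1) (i : ℕ) :
    v (g.derivative.coeff i) ≤ 1 := by
  rw [coeff_derivative, map_mul, ← Nat.cast_succ]
  exact mul_le_one' (hg _) (natCast_mem v.integer _)

theorem exists_unique_isRoot_valuation_sub_lt_one {g : F[X]} (hs : g.Splits)
    (hg : ∀ i, v (g.coeff i) ≤ 1) {b : F} (hb : v b ≤ 1) (h0 : v (g.eval b) < 1)
    (h1 : v (g.derivative.eval b) = 1) :
    ∃ ρ, g.IsRoot ρ ∧ v (g.derivative.eval ρ) = 1 ∧ v (ρ - b) < 1 ∧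
      ∀ y, g.IsRoot y → v (y - b) < 1 → y = ρ := by
  obtain ⟨ρ, hρ, hρb⟩ := exists_isRoot_valuation_sub_lt_one hs h0 h1
  have hle {y : F} (hyb : v (y - b) < 1) : v y ≤ 1 :=
    sub_add_cancel y b ▸ v.map_add_le hyb.le hb
  have hdρ : v (g.derivative.eval ρ) = 1 := (v.map_eq_of_sub_lt (h1 ▸ (valuation_eval_sub_eval_le
    (valuation_coeff_derivative_le_one hg) (hle hρb) hb).trans_lt hρb)).trans h1
  refine ⟨ρ, hρ, hdρ, hρb, fun y hy hyb => (eq_of_isRoot_of_valuation_sub_lt_one hg (hle hρb)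
    (hle hyb) ?_ hdρ hρ hy).symm⟩
  rw [← sub_sub_sub_cancel_right ρ y b]
  exact v.map_sub_lt hρb hyb

variable {E : Type*} [Field E] [Algebra E F]

theorem isSeparable_of_aeval_derivative_ne_zero {g : E[X]} {ρ : F} (h0 : aeval ρ g = 0)
    (h1 : aeval ρ (derivative g) ≠ 0) : IsSeparable E ρ := by
  have hg : g ≠ 0 := by
    rintro rfl
    simp at h1
  obtain ⟨r, hr⟩ := minpoly.dvd E ρ h0
  refine (separable_iff_derivative_ne_zero (minpoly.irreducible
    (isAlgebraic_iff_isIntegral.mp ⟨g, hg, h0⟩))).mpr fun hd => h1 ?_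
  rw [hr, derivative_mul, hd, zero_mul, zero_add, map_mul, minpoly.aeval, zero_mul]

theorem mem_range_of_forall_algEquiv_apply_eq [Normal E F] {ρ : F} (hρ : IsSeparable E ρ)
    (hfix : ∀ τ : F ≃ₐ[E] F, τ ρ = ρ) : ρ ∈ (algebraMap E F).range := by
  by_contra hmem
  obtain ⟨y, hy, hconj⟩ := (notMem_iff_exists_ne_and_isConjRoot hρ (Normal.splits' ρ)).mp
    fun h => hmem (Algebra.mem_bot.mp h)
  obtain ⟨τ, hτ⟩ := isConjRoot_iff_exists_algEquiv.mp hconj.symm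
  exact hy (hτ ▸ (hfix τ).symm)

/- The root of `g` near `b` is unique, hence Galois-invariant, and it is separable because it is a
simple root. -/
theorem isHenselianValuation_comap_of_isAlgClosed [IsAlgClosed F] [Algebra.IsAlgebraic E F]
    (hinv : ∀ (τ : F ≃ₐ[E] F) x, v (τ x) = v x) :
    IsHenselianValuation (v.comap (algebraMap E F)) := by
  intro g hg b hb h0 h1
  have : Normal E F := ⟨fun x => IsAlgClosed.splits _⟩
  have heval (q : E[X]) (c : E) : (q.map (algebraMap E F)).eval (algebraMap E F c) =
      algebraMap E F (q.eval c) := eval_map_apply (algebraMap E F) c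
  obtain ⟨ρ, hρ, hdρ, hρb, huniq⟩ := exists_unique_isRoot_valuation_sub_lt_one (v := v)
    (IsAlgClosed.splits (g.map (algebraMap E F)))
    (fun i => (coeff_map (algebraMap E F) i) ▸ hg i) hb
    (by rwa [heval]) (by rwa [derivative_map, heval])
  have hfix (τ : F ≃ₐ[E] F) : τ ρ = ρ := by
    refine huniq _ ?_ (by rwa [← τ.commutes b, ← map_sub, hinv])
    rw [IsRoot, eval_map_algebraMap, aeval_algEquiv, AlgHom.comp_apply, ← eval_map_algebraMap,
      hρ.eq_zero]
    exact map_zero τ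
  have hdρ0 : aeval ρ (derivative g) ≠ 0 := by
    rw [← eval_map_algebraMap, ← derivative_map]
    exact v.ne_zero_iff.mp (hdρ ▸ one_ne_zero)
  obtain ⟨c, rfl⟩ := mem_range_of_forall_algEquiv_apply_eq
    (isSeparable_of_aeval_derivative_ne_zero ((eval_map_algebraMap g ρ).symm.trans hρ) hdρ0) hfix
  refine ⟨c, (algebraMap E F).injective ?_, ?_⟩
  · rw [← heval, hρ.eq_zero, map_zero]
  · rwa [Valuation.comap_apply, map_sub]

end IntegralClosureValuation

section Tower

section GaloisStep

variable {E L Γ : Type*} [Field E] [Field L] [Algebra E L] [LinearOrderedCommGroupWithZero Γ]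
  {v : Valuation L Γ} [FiniteDimensional E L] [IsGalois E L]

theorem IsHenselianValuation.exists_isMonogenicallyExhausted_of_residually_trivial
    (hw : IsHenselianValuation (v.comap (algebraMap E L)))
    (hinv : ∀ (σ : L ≃ₐ[E] L) x, v (σ x) = v x)
    (hres : ∀ (σ : L ≃ₐ[E] L) x, v x ≤ 1 → v (σ x - x) < 1) [Nontrivial (L ≃ₐ[E] L)] :
    ∃ E' : IntermediateField E L, E' ≠ ⊥ ∧
      IsMonogenicallyExhausted E (v.comap (algebraMap E' L)) := by
  have := isSolvable_of_valuation_smul_sub_lt_one hinv hres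
  obtain ⟨N, hN, hindex⟩ := exists_normal_prime_index (L ≃ₐ[E] L)
  let E' := IntermediateField.fixedField N
  have : IsGalois E E' := IsGalois.of_fixedField_normal_subgroup N
  have hfinrank : Module.finrank E E' = N.index := by
    rw [IntermediateField.finrank_eq_fixingSubgroup_index,
      IntermediateField.fixingSubgroup_fixedField]
  have hlift (τ : E' ≃ₐ[E] E') (x : E') : (τ x : L) = τ.liftNormal L x :=
    (τ.liftNormal_commutes L x).symm
  refine ⟨E', fun hbot => hindex.one_lt.ne ?_,
    IsHenselianValuation.isMonogenicallyExhausted_of_finrank_prime hw (hfinrank ▸ hindex) ?_ ?_⟩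
  · rw [← hfinrank, hbot, IntermediateField.finrank_bot]
  · intro τ x
    exact (congrArg v (hlift τ x)).trans (hinv _ _)
  · intro τ x hx
    exact (congrArg (fun y => v (y - (x : L))) (hlift τ x)).trans_lt (hres _ _ hx)

theorem IsHenselianValuation.exists_isMonogenicallyExhausted [Nontrivial (L ≃ₐ[E] L)]
    (hv : IsHenselianValuation v) (hw : IsHenselianValuation (v.comap (algebraMap E L)))
    (hinv : ∀ (σ : L ≃ₐ[E] L) x, v (σ x) = v x) :
    ∃ E' : IntermediateField E L, E' ≠ ⊥ ∧
      IsMonogenicallyExhausted E (v.comap (algebraMap E' L)) := by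
  by_cases! hres : ∀ (σ : L ≃ₐ[E] L) x, v x ≤ 1 → v (σ x - x) < 1
  · exact hw.exists_isMonogenicallyExhausted_of_residually_trivial hinv hres
  · obtain ⟨σ, b, hb, hσb⟩ := hres
    exact hv.exists_isMonogenicallyExhausted_of_not_lt (σ := σ) (hinv σ) hb hσb.not_gt

end GaloisStep

variable {A K L Γ : Type*} [CommRing A] [Field K] [Algebra A K] [Field L] [Algebra K L]
  [Algebra A L] [IsScalarTower A K L]
  [LinearOrderedCommGroupWithZero Γ] {v : Valuation L Γ}

theorem IsExhaustedByFreeCI.exists_gt [IsGalois K L] [FiniteDimensional K L]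
    (hv : ∀ x, v x ≤ 1 ↔ IsIntegral A x) (hL : IsHenselianValuation v)
    {E : IntermediateField K L} (hE : IsHenselianValuation (v.comap (algebraMap E L)))
    (htop : E ≠ ⊤) (hexh : IsExhaustedByFreeCI A E) :
    ∃ E' : IntermediateField K L, E < E' ∧ IsExhaustedByFreeCI A E' := by
  have hinv (σ : L ≃ₐ[E] L) (x : L) : v (σ x) = v x :=
    valuation_map_eq_of_le_one_iff_isIntegral hv (σ.restrictScalars K) x
  have : Nontrivial (L ≃ₐ[E] L) := by
    rw [← Finite.one_lt_card_iff_nontrivial, IsGalois.card_aut_eq_finrank]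
    exact lt_of_le_of_ne Module.finrank_pos
      (Ne.symm (mt IntermediateField.finrank_eq_one_iff_eq_top.mp htop))
  obtain ⟨E', hbot, hmon⟩ := hL.exists_isMonogenicallyExhausted hE hinv
  let F : IntermediateField K L := E'.restrictScalars K
  have hlt : E < F := by
    refine lt_of_le_of_ne (fun x hx => E'.algebraMap_mem ⟨x, hx⟩) fun h => hbot ?_
    refine IntermediateField.restrictScalars_injective K (h.symm.trans ?_)
    exact (IntermediateField.restrictScalars_bot_eq_self E).symm
  let : Algebra E F := (inferInstance : Algebra E E')
  have : IsScalarTower A E L := .to₁₃₄ A K E L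
  have : IsScalarTower A F L := .to₁₃₄ A K F L
  have : IsScalarTower E F L := .of_algebraMap_eq fun _ => rfl
  have : IsScalarTower A E F := .to₁₂₃ A E F L
  have hmonF : IsMonogenicallyExhausted E (v.comap (algebraMap F L)) := hmon
  exact ⟨F, hlt, hmonF.isExhaustedByFreeCI (fun x => (hv x).trans
    (isIntegral_algebraMap_iff (algebraMap F L).injective)) hexh⟩

theorem isExhaustedByFreeCI_of_isHenselianValuation [IsIntegrallyClosed A]
    [IsFractionRing A K] [IsGalois K L] [FiniteDimensional K L]
    (hv : ∀ x, v x ≤ 1 ↔ IsIntegral A x) (hL : IsHenselianValuation v)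
    (hE : ∀ E : IntermediateField K L, IsHenselianValuation (v.comap (algebraMap E L))) :
    IsExhaustedByFreeCI A L := by
  have hbot : IsExhaustedByFreeCI A (⊥ : IntermediateField K L) :=
    (IsExhaustedByFreeCI.of_isFractionRing A K).of_algEquiv
      ((IntermediateField.botEquiv K L).symm.restrictScalars A)
  have := Field.finite_intermediateField_of_exists_primitive_element K L
    (Field.exists_primitive_element K L)
  obtain ⟨E, -, hexh, hmax⟩ := exists_maximal_ge_of_wellFoundedGT
    (fun E : IntermediateField K L => IsExhaustedByFreeCI A E) ⊥ hbot
  have htop : E = ⊤ := by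
    by_contra htop
    obtain ⟨E', hlt, hE'⟩ := hexh.exists_gt hv hL (hE E) htop
    exact hlt.not_ge (hmax hE' hlt.le)
  subst htop
  exact hexh.of_algEquiv (IntermediateField.topEquiv.restrictScalars A)

theorem isExhaustedByFreeCI_of_isGalois (A K L : Type*) [CommRing A] [IsDomain A] [ValuationRing A]
    [HenselianLocalRing A] [Field K] [Algebra A K] [IsFractionRing A K] [Field L] [Algebra K L]
    [Algebra A L] [IsScalarTower A K L] [IsGalois K L] [FiniteDimensional K L] :
    IsExhaustedByFreeCI A L := by
  let Ω := AlgebraicClosure L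
  have : IsScalarTower A K Ω := .to₁₂₄ A K L Ω
  have : Algebra.IsAlgebraic K Ω := .trans K L Ω
  have : Normal K Ω := ⟨fun x => IsAlgClosed.splits _⟩
  obtain ⟨V, hV⟩ := exists_valuationSubring_valuation_le_one_iff A K Ω
  have hinv := valuation_map_eq_of_le_one_iff_isIntegral (K := K) hV
  refine isExhaustedByFreeCI_of_isHenselianValuation (K := K)
    (v := V.valuation.comap (algebraMap L Ω))
    (fun x => (hV _).trans (isIntegral_algebraMap_iff (algebraMap L Ω).injective))
    (isHenselianValuation_comap_of_isAlgClosed fun τ => hinv (τ.restrictScalars K))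
    fun E => ?_
  have : Algebra.IsAlgebraic E Ω := .tower_top (K := K) E
  rw [← Valuation.comap_comp, ← IsScalarTower.algebraMap_eq E L Ω]
  exact isHenselianValuation_comap_of_isAlgClosed fun τ => hinv (τ.restrictScalars K)

end Tower

/-- Let `A` be a Henselian valuation ring which is not a field, with fraction field `K`, let
`L/K` be a finite Galois extension and let `B` be the integral closure of `A` in `L`.  Then
for any finite subset `S` of `B` there is an `A`-subalgebra `B'` of `B` containing `S` which
is free of finite rank as an `A`-module and of complete intersection over `A`. -/
theorem exists_complete_intersection_subalgebra
    {A K L : Type*} [CommRing A] [IsDomain A] [ValuationRing A] [HenselianLocalRing A]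
    (hA : ¬IsField A)
    [Field K] [Algebra A K] [IsFractionRing A K]
    [Field L] [Algebra K L] [Algebra A L] [IsScalarTower A K L]
    [IsGalois K L] [FiniteDimensional K L]
    (S : Finset ↥(integralClosure A L)) :
    ∃ B' : Subalgebra A ↥(integralClosure A L),
      (S : Set ↥(integralClosure A L)) ⊆ B' ∧
      Module.Free A ↥B' ∧ Module.Finite A ↥B' ∧
      IsCompleteIntersectionOver A ↥B' := by
  classical
  obtain ⟨C, hSC, hC⟩ := isExhaustedByFreeCI_of_isGalois A K L (S.image Subtype.val) fun s hs => by
    obtain ⟨b, -, rfl⟩ := Finset.mem_image.mp hs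
    exact b.2
  have := hC.finite
  have hle : C ≤ integralClosure A L := fun c hc =>
    (Algebra.IsIntegral.isIntegral (R := A) (⟨c, hc⟩ : C)).map C.val
  have hB' := hC.range (Subalgebra.inclusion_injective hle)
  exact ⟨(Subalgebra.inclusion hle).range,
    fun s hs => ⟨⟨s, hSC _ (Finset.mem_image_of_mem _ hs)⟩, rfl⟩,
    hB'.free, hB'.finite, hB'.isCompleteIntersectionOver⟩
end

section
/- Assume the residue field of A has characteristic p > 0 and let L/K be a cyclic Galois extension of degree p, with B the integral closure of A in L. Let y ∈ B, let z ∈ A[y], and assume that for every non-trivial σ ∈ Gal(L/K) there is a unit u of the ring A[y] with σ(z) − z = (σ(y) − y)·u. Then A[y] = A[z]. -/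
set_option synthInstance.maxHeartbeats 400000

/-!
Let `g` and `h` be the minimal polynomials over `K` of `y` and `z`, both generators of the field
`F = K(y)`. By Euler's formula the trace dual of `A[y]` is `g'(y)⁻¹ A[y]`, and likewise for `z`;
since taking duals reverses the inclusion `A[z] ⊆ A[y]`, this gives
`g'(y)⁻¹ A[y] ⊆ h'(z)⁻¹ A[z]`. Now `g'(y)` is the product of the differences `y - σ y` over the
conjugates `σ y ≠ y`, so divisibility of `σ y - y` by `σ z - z` for all `σ` gives
`g'(y) = h'(z) b` with `b` integral over `A`. Hence `b⁻¹ A[y] ⊆ A[z]`. In particular `b⁻¹ ∈ A[z]`,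
and since `b` is integral this forces `b ∈ A[z]`, so that `A[y] ⊆ A[z]`.
-/

open IntermediateField Polynomial
open scoped Pointwise

theorem mem_of_mul_eq_one_of_isIntegral {R S : Type*} [CommRing R] [CommRing S] [Algebra R S]
    {T : Subalgebra R S} {a b : S} (ha : a ∈ T) (hb : IsIntegral R b) (hab : a * b = 1) :
    b ∈ T := by
  let a' : T := ⟨a, ha⟩
  let b' : integralClosure T S := ⟨b, hb.tower_top⟩
  have ha' : IsUnit (algebraMap T (integralClosure T S) a') :=
    .of_mul_eq_one b' (Subtype.ext hab)
  have hinj : Function.Injective (algebraMap T (integralClosure T S)) :=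
    .of_comp (f := (integralClosure T S).val) Subtype.val_injective
  have : IsLocalHom (algebraMap T (integralClosure T S)) :=
    algebraMap_isIntegral_iff.2 inferInstance |>.isLocalHom hinj
  obtain ⟨c, hc⟩ := (isUnit_of_map_unit _ _ ha').exists_left_inv
  have hcb : (c : S) = b := left_inv_eq_right_inv (congrArg Subtype.val hc) hab
  exact hcb ▸ c.2

section

variable {K F E : Type*} [Field K] [Field F] [Field E] [Algebra K F] [Algebra K E]
  [FiniteDimensional K F] [Algebra.IsSeparable K F]

theorem aroots_minpoly_eq_map_algHom (hE : ∀ x : F, ((minpoly K x).map (algebraMap K E)).Splits)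
    {x : F} (hx : K⟮x⟯ = ⊤) :
    (minpoly K x).aroots E =
      (Finset.univ : Finset (F →ₐ[K] E)).val.map fun φ ↦ φ x := by
  have hinj := (Field.primitive_element_iff_algHom_eq_of_eval' K E hE x).1 hx
  have hsep : (minpoly K x).Separable := Algebra.IsSeparable.isSeparable K x
  refine (Multiset.Nodup.ext (nodup_roots hsep.map) (Finset.univ.nodup.map hinj)).2 fun r ↦ ?_
  have hrange := Set.ext_iff.1
    (Algebra.IsAlgebraic.range_eval_eq_rootSet_minpoly_of_splits E hE x) r
  classical
  simpa [rootSet_def] using hrange.symm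

theorem algHom_aeval_derivative_minpoly_eq_prod [DecidableEq (F →ₐ[K] E)]
    (hE : ∀ x : F, ((minpoly K x).map (algebraMap K E)).Splits)
    {x : F} (hx : K⟮x⟯ = ⊤) (ψ : F →ₐ[K] E) :
    ψ (aeval x (derivative (minpoly K x))) = ∏ φ ∈ Finset.univ.erase ψ, (ψ x - φ x) := by
  classical
  have hinj := (Field.primitive_element_iff_algHom_eq_of_eval' K E hE x).1 hx
  have hroots := aroots_minpoly_eq_map_algHom hE hx
  have hψ : ψ x ∈ (minpoly K x).aroots E :=
    hroots ▸ Multiset.mem_map_of_mem (fun φ : F →ₐ[K] E ↦ φ x) (Finset.mem_univ_val ψ)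
  rw [← aeval_algHom_apply, ← eval_map_algebraMap, ← derivative_map,
    (hE x).eval_root_derivative ((minpoly.monic (Algebra.IsIntegral.isIntegral x)).map _) hψ,
    ← aroots_def, hroots, ← Multiset.map_erase _ hinj, Multiset.map_map]
  rfl

theorem exists_isIntegral_aeval_derivative_minpoly_eq_mul {A : Type*} [CommRing A] [Algebra A K]
    [Algebra A F] [Algebra A E] [IsScalarTower A K F] [IsScalarTower A K E]
    (hE : ∀ x : F, ((minpoly K x).map (algebraMap K E)).Splits)
    {y z : F} (hy : K⟮y⟯ = ⊤) (hz : K⟮z⟯ = ⊤) (ψ : F →ₐ[K] E)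
    (h : ∀ φ : F →ₐ[K] E, φ ≠ ψ → ∃ b : E, IsIntegral A b ∧ ψ y - φ y = (ψ z - φ z) * b) :
    ∃ b : F, IsIntegral A b ∧
      aeval y (derivative (minpoly K y)) = aeval z (derivative (minpoly K z)) * b := by
  classical
  choose! b hb hyz using h
  set g := aeval y (derivative (minpoly K y))
  set h := aeval z (derivative (minpoly K z))
  have hh : h ≠ 0 := (Algebra.IsSeparable.isSeparable K z).aeval_derivative_ne_zero
    (minpoly.aeval K z)
  have hψ : ψ g = ψ h * ∏ φ ∈ Finset.univ.erase ψ, b φ := by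
    rw [algHom_aeval_derivative_minpoly_eq_prod hE hy,
      algHom_aeval_derivative_minpoly_eq_prod hE hz, ← Finset.prod_mul_distrib]
    exact Finset.prod_congr rfl fun φ hφ ↦ hyz φ (Finset.ne_of_mem_erase hφ)
  refine ⟨g / h, ?_, (mul_div_cancel₀ g hh).symm⟩
  rw [← isIntegral_algHom_iff (ψ.restrictScalars A) ψ.injective, AlgHom.restrictScalars_apply,
    map_div₀, hψ, mul_div_cancel_left₀ _ ((map_ne_zero ψ).2 hh)]
  exact IsIntegral.prod _ fun φ hφ ↦ hb φ (Finset.ne_of_mem_erase hφ)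

end

section

variable {A K F : Type*} [CommRing A] [IsDomain A] [IsIntegrallyClosed A]
  [Field K] [Algebra A K] [IsFractionRing A K]
  [Field F] [Algebra K F] [Algebra A F] [IsScalarTower A K F]
  [FiniteDimensional K F] [Algebra.IsSeparable K F]

theorem inv_smul_adjoin_le_of_adjoin_le {y z : F} (hy : K⟮y⟯ = ⊤) (hz : K⟮z⟯ = ⊤)
    (hAy : IsIntegral A y) (hle : Algebra.adjoin A {z} ≤ Algebra.adjoin A {y}) :
    (aeval y (derivative (minpoly K y)))⁻¹ • Subalgebra.toSubmodule (Algebra.adjoin A {y}) ≤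
      (aeval z (derivative (minpoly K z)))⁻¹ • Subalgebra.toSubmodule (Algebra.adjoin A {z}) := by
  have hAz : IsIntegral A z :=
    adjoin_le_integralClosure hAy (hle (Algebra.self_mem_adjoin_singleton A z))
  have adjoin_eq_top {x : F} (hx : K⟮x⟯ = ⊤) : Algebra.adjoin K {x} = ⊤ := by
    rw [← adjoin_simple_toSubalgebra_of_isAlgebraic (Algebra.IsAlgebraic.isAlgebraic x), hx,
      top_toSubalgebra]
  rw [← traceForm_dualSubmodule_adjoin A K (adjoin_eq_top hy) hAy,
    ← traceForm_dualSubmodule_adjoin A K (adjoin_eq_top hz) hAz]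
  exact fun x hx a ha ↦ hx a (hle ha)

theorem adjoin_eq_of_aeval_derivative_minpoly_eq_mul {y z b : F}
    (hy : K⟮y⟯ = ⊤) (hz : K⟮z⟯ = ⊤) (hAy : IsIntegral A y) (hzy : z ∈ Algebra.adjoin A {y})
    (hb : IsIntegral A b)
    (h : aeval y (derivative (minpoly K y)) = aeval z (derivative (minpoly K z)) * b) :
    Algebra.adjoin A {y} = Algebra.adjoin A {z} := by
  have hle : Algebra.adjoin A {z} ≤ Algebra.adjoin A {y} := Algebra.adjoin_singleton_le hzy
  have hg : aeval y (derivative (minpoly K y)) ≠ 0 :=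
    (Algebra.IsSeparable.isSeparable K y).aeval_derivative_ne_zero (minpoly.aeval K y)
  have hh : aeval z (derivative (minpoly K z)) ≠ 0 := left_ne_zero_of_mul (h ▸ hg)
  have hb0 : b ≠ 0 := right_ne_zero_of_mul (h ▸ hg)
  have hmul : ∀ x ∈ Algebra.adjoin A {y}, b⁻¹ * x ∈ Algebra.adjoin A {z} := by
    intro x hx
    obtain ⟨w, hw, hwx⟩ := inv_smul_adjoin_le_of_adjoin_le hy hz hAy hle
      (Submodule.smul_mem_pointwise_smul x _ _ hx)
    have hwx : (aeval z (derivative (minpoly K z)))⁻¹ * w =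
        (aeval y (derivative (minpoly K y)))⁻¹ * x := hwx
    rw [h, mul_inv, mul_assoc] at hwx
    exact mul_left_cancel₀ (inv_ne_zero hh) hwx ▸ hw
  have hb_inv : b⁻¹ ∈ Algebra.adjoin A {z} := by simpa using hmul 1 (one_mem _)
  have hb_mem : b ∈ Algebra.adjoin A {z} :=
    mem_of_mul_eq_one_of_isIntegral hb_inv hb (inv_mul_cancel₀ hb0)
  refine le_antisymm (fun x hx ↦ ?_) hle
  rw [← mul_inv_cancel_left₀ hb0 x]
  exact mul_mem hb_mem (hmul x hx)

theorem adjoin_eq_of_forall_algHom_sub_eq_mul {E : Type*} [Field E] [Algebra K E] [Algebra A E]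
    [IsScalarTower A K E] (hE : ∀ x : F, ((minpoly K x).map (algebraMap K E)).Splits)
    {y z : F} (hy : K⟮y⟯ = ⊤) (hAy : IsIntegral A y) (hzy : z ∈ Algebra.adjoin A {y})
    (ψ : F →ₐ[K] E)
    (h : ∀ φ : F →ₐ[K] E, φ ≠ ψ → ∃ b : E, IsIntegral A b ∧ ψ y - φ y = (ψ z - φ z) * b) :
    Algebra.adjoin A {y} = Algebra.adjoin A {z} := by
  have hz : K⟮z⟯ = ⊤ := by
    rw [Field.primitive_element_iff_algHom_eq_of_eval K E hE z ψ]
    intro φ hφ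
    by_contra! hne
    obtain ⟨b, -, hb⟩ := h φ hne.symm
    rw [hφ, sub_self, zero_mul, sub_eq_zero] at hb
    exact hne ((Field.primitive_element_iff_algHom_eq_of_eval K E hE y ψ).1 hy φ hb)
  obtain ⟨b, hb, hyz⟩ := exists_isIntegral_aeval_derivative_minpoly_eq_mul hE hy hz ψ h
  exact adjoin_eq_of_aeval_derivative_minpoly_eq_mul hy hz hAy hzy hb hyz

end

theorem exists_algEquiv_comp_val_eq {K L : Type*} [Field K] [Field L] [Algebra K L] [Normal K L]
    (F : IntermediateField K L) (φ : F →ₐ[K] L) : ∃ σ : L ≃ₐ[K] L, ∀ x : F, σ x = φ x :=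
  ⟨(Algebra.IsAlgebraic.algEquivEquivAlgHom K L).symm (φ.liftNormal L),
    φ.liftNormal_commutes L⟩

theorem adjoin_apply_eq_adjoin_apply_iff {R S T : Type*} [CommSemiring R] [Semiring S] [Semiring T]
    [Algebra R S] [Algebra R T] {f : S →ₐ[R] T} (hf : Function.Injective f) {x y : S} :
    Algebra.adjoin R {f x} = Algebra.adjoin R {f y} ↔
      Algebra.adjoin R {x} = Algebra.adjoin R {y} := by
  rw [← f.map_adjoin_singleton, ← f.map_adjoin_singleton, (Subalgebra.map_injective hf).eq_iff]

section

variable {A K L : Type*} [CommRing A] [IsDomain A] [IsIntegrallyClosed A]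
  [Field K] [Algebra A K] [IsFractionRing A K]
  [Field L] [Algebra K L] [Algebra A L] [IsScalarTower A K L] [Normal K L]

theorem adjoin_eq_of_forall_algEquiv_sub_eq_mul_of_adjoin_eq_top {F : IntermediateField K L}
    [FiniteDimensional K F] [Algebra.IsSeparable K F] {y z : F} (hy : K⟮y⟯ = ⊤)
    (hAy : IsIntegral A y) (hzy : z ∈ Algebra.adjoin A {y})
    (h : ∀ σ : L ≃ₐ[K] L, σ ≠ 1 → ∃ b : L, IsIntegral A b ∧ σ y - y = (σ z - z) * b) :
    Algebra.adjoin A {y} = Algebra.adjoin A {z} := by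
  have hsplits (x : F) : ((minpoly K x).map (algebraMap K L)).Splits := by
    rw [← minpoly.algHom_eq F.val F.val.injective]
    exact Normal.splits inferInstance _
  refine adjoin_eq_of_forall_algHom_sub_eq_mul hsplits hy hAy hzy F.val fun φ hφ ↦ ?_
  obtain ⟨σ, hσ⟩ := exists_algEquiv_comp_val_eq F φ
  have hσ1 : σ ≠ 1 := by
    rintro rfl
    exact hφ (AlgHom.ext fun x ↦ (hσ x).symm)
  obtain ⟨b, hb, hyz⟩ := h σ hσ1
  rw [hσ, hσ] at hyz
  exact ⟨b, hb, by simpa only [neg_sub, ← neg_mul, coe_val] using congrArg Neg.neg hyz⟩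

theorem adjoin_eq_of_forall_algEquiv_sub_eq_mul
    {y z : L} (hy : IsSeparable K y) (hAy : IsIntegral A y) (hzy : z ∈ Algebra.adjoin A {y})
    (h : ∀ σ : L ≃ₐ[K] L, σ ≠ 1 → ∃ b : L, IsIntegral A b ∧ σ y - y = (σ z - z) * b) :
    Algebra.adjoin A {y} = Algebra.adjoin A {z} := by
  have : FiniteDimensional K K⟮y⟯ := adjoin.finiteDimensional hy.isIntegral
  have : Algebra.IsSeparable K K⟮y⟯ := (isSeparable_adjoin_simple_iff_isSeparable K L).2 hy
  let ι : K⟮y⟯ →ₐ[A] L := K⟮y⟯.val.restrictScalars A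
  have hι : Function.Injective ι := Subtype.val_injective
  let y' : K⟮y⟯ := AdjoinSimple.gen K y
  have hgen : K⟮y'⟯ = ⊤ := by
    rw [Field.primitive_element_iff_minpoly_natDegree_eq, minpoly_gen,
      adjoin.finrank hy.isIntegral]
  obtain ⟨z', hz', rfl⟩ : ∃ z' ∈ Algebra.adjoin A {y'}, ι z' = z := by
    rwa [← Subalgebra.mem_map, ι.map_adjoin_singleton]
  exact (adjoin_apply_eq_adjoin_apply_iff hι (x := y')).2 <|
    adjoin_eq_of_forall_algEquiv_sub_eq_mul_of_adjoin_eq_top hgen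
      ((isIntegral_algHom_iff ι hι).1 hAy) hz' h

end

theorem adjoin_eq_of_sigma_diff_general
    {A K L : Type*} [CommRing A] [IsDomain A] [IsIntegrallyClosed A]
    [Field K] [Algebra A K] [IsFractionRing A K]
    [Field L] [Algebra K L] [Algebra A L] [IsScalarTower A K L] [Normal K L]
    (y z : integralClosure A L) (hy : IsSeparable K (y : L))
    (hz : z ∈ Algebra.adjoin A {y})
    (h : ∀ σ : L ≃ₐ[K] L, σ ≠ 1 →
      ∃ b : integralClosure A L, σ (y : L) - y = (σ (z : L) - z) * b) :
    Algebra.adjoin A {y} = Algebra.adjoin A {z} := by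
  let ι : integralClosure A L →ₐ[A] L := (integralClosure A L).val
  have hz' : (z : L) ∈ Algebra.adjoin A {(y : L)} :=
    ι.map_adjoin_singleton y ▸ Subalgebra.mem_map.2 ⟨z, hz, rfl⟩
  refine (adjoin_apply_eq_adjoin_apply_iff (f := ι) Subtype.val_injective).1 <|
    adjoin_eq_of_forall_algEquiv_sub_eq_mul hy y.2 hz' fun σ hσ ↦ ?_
  obtain ⟨b, hb⟩ := h σ hσ
  exact ⟨b, b.2, hb⟩

/-- Let `A` be a Henselian valuation ring which is not a field, with fraction field `K` and
residue field of characteristic `p > 0`, let `L/K` be a cyclic Galois extension of degree `p`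
and let `B` be the integral closure of `A` in `L`.  Let `y ∈ B` and `z ∈ A[y]`, and assume
that for every nontrivial `σ ∈ Gal(L/K)` there is a unit `u` of the ring `A[y]` with
`σ(z) − z = (σ(y) − y)·u`.  Then `A[y] = A[z]`. -/
theorem adjoin_eq_of_sigma_diff
    {A K L : Type*} [CommRing A] [IsDomain A] [ValuationRing A] [HenselianLocalRing A]
    (hA : ¬IsField A)
    [Field K] [Algebra A K] [IsFractionRing A K]
    [Field L] [Algebra K L] [Algebra A L] [IsScalarTower A K L]
    [IsGalois K L] [FiniteDimensional K L]
    (p : ℕ) (hp : p.Prime) [CharP (IsLocalRing.ResidueField A) p]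
    [IsCyclic (L ≃ₐ[K] L)] (hcard : Nat.card (L ≃ₐ[K] L) = p)
    (y z : ↥(integralClosure A L))
    (hz : z ∈ Algebra.adjoin A ({y} : Set ↥(integralClosure A L)))
    (hu : ∀ σ : L ≃ₐ[K] L, σ ≠ 1 →
      ∃ u : (Algebra.adjoin A ({y} : Set ↥(integralClosure A L)))ˣ,
        σ (z : L) - (z : L) =
          (σ (y : L) - (y : L)) *
            (((u : Algebra.adjoin A ({y} : Set ↥(integralClosure A L))) :
              ↥(integralClosure A L)) : L)) :
    Algebra.adjoin A ({y} : Set ↥(integralClosure A L)) =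
      Algebra.adjoin A ({z} : Set ↥(integralClosure A L)) := by
  let ι : Algebra.adjoin A {y} →ₐ[A] L := (integralClosure A L).val.comp (Algebra.adjoin A {y}).val
  exact adjoin_eq_of_sigma_diff_general y z (Algebra.IsSeparable.isSeparable K (y : L)) hz
    fun σ hσ ↦ (hu σ hσ).imp' (fun u ↦ (u⁻¹).val) fun u h ↦
      (Units.eq_mul_inv_iff_mul_eq (Units.map (ι : _ →* L) u)).2 h.symm
end
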